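/- arXiv:2402.07816 — 4 statements merged into one kernel-verified Lean document; each statement's English description precedes it below -/
import Mathlib

section
/- Assume that A0 is a left Noetherian ring and that M admits a V-filtration (V^α)_{α∈ℚ}. Then for every α ∈ ℚ and every w ∈ M, one has w ∈ V^α if and only if the b-function b_w of w (the monic generator of the ideal I_w, which is nonzero and has only rational roots) has all of its roots ≤ −α. -/
open Module

section VFiltration

variable {k : Type*} [Field k] [CharZero k]
variable {M : Type*} [AddCommGroup M] [Module k M]

/-- The subalgebra `A0 ⊆ End_k(M)` generated by `T`, `S = -(D∘T)` and the set `C`. -/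
def VFilt.A0 (T D : Module.End k M) (C : Set (Module.End k M)) :
    Subalgebra k (Module.End k M) :=
  Algebra.adjoin k ({T, -(D * T)} ∪ C)

/-- `V^{>α} = ⋃_{β > α} V^β`. -/
def VFilt.gt (V : ℚ → Submodule k M) (α : ℚ) : Submodule k M := ⨆ β > α, V β

/-- A weak `V`-filtration on `M` with respect to the data `T`, `D`, `C`. -/
structure IsWeakVFiltration (T D : Module.End k M) (C : Set (Module.End k M))
    (V : ℚ → Submodule k M) : Prop where
  /-- decreasing -/
  antitone : Antitone V
  /-- exhaustive -/
  exhaustive : ∀ m : M, ∃ α : ℚ, m ∈ V α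
  /-- discrete and left-continuous -/
  discrete : ∃ ℓ : ℕ, 0 < ℓ ∧ ∀ (i : ℤ) (α β : ℚ),
    α ∈ Set.Ioc ((i : ℚ) / ℓ) ((i + 1 : ℚ) / ℓ) →
    β ∈ Set.Ioc ((i : ℚ) / ℓ) ((i + 1 : ℚ) / ℓ) → V α = V β
  /-- each `V^α` is stable under every element of `A0` -/
  stable : ∀ a ∈ VFilt.A0 T D C, ∀ α : ℚ, (V α).map a ≤ V α
  /-- `T(V^α) ⊆ V^{α+1}` -/
  mapT_le : ∀ α : ℚ, (V α).map T ≤ V (α + 1)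
  /-- `D(V^α) ⊆ V^{α-1}` -/
  mapD_le : ∀ α : ℚ, (V α).map D ≤ V (α - 1)
  /-- `(S + α·id)^N (V^α) ⊆ V^{>α}` for some `N ≥ 1` -/
  nilpotent : ∀ α : ℚ, ∃ N : ℕ, 1 ≤ N ∧ ∀ u ∈ V α,
    ((-(D * T) + (α : k) • (1 : Module.End k M)) ^ N) u ∈ VFilt.gt V α

/-- A `V`-filtration on `M`: a weak `V`-filtration such that each `V^α` is a finitely
generated `A0`-module and `T(V^α) = V^{α+1}` for `α > 0`. -/
structure IsVFiltration (T D : Module.End k M) (C : Set (Module.End k M))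
    (V : ℚ → Submodule k M) extends IsWeakVFiltration T D C V : Prop where
  /-- each `V^α` is a finitely generated `A0`-module: it is the smallest `A0`-stable
  `k`-subspace containing some finite set -/
  fg : ∀ α : ℚ, ∃ F : Finset M, (↑F : Set M) ⊆ (V α : Set M) ∧
    ∀ W : Submodule k M, (∀ a ∈ VFilt.A0 T D C, W.map a ≤ W) →
      (↑F : Set M) ⊆ (W : Set M) → V α ≤ W
  /-- `T(V^α) = V^{α+1}` for `α > 0` -/
  mapT_eq : ∀ α : ℚ, 0 < α → (V α).map T = V (α + 1)

end VFiltration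

/-- The ideal `I_w = {b ∈ k[x] : b(S)(w) ∈ A0·(T w)}` attached to `w ∈ M`
(abstracting the condition `b(s)·w ∈ V^1 D_{X×A¹}·w` defining the `b`-function of `w`). -/
def VFilt.bSet {k : Type*} [Field k] [CharZero k]
    {M : Type*} [AddCommGroup M] [Module k M]
    (T D : Module.End k M) (C : Set (Module.End k M)) (w : M) : Set (Polynomial k) :=
  {b : Polynomial k | ∃ a ∈ VFilt.A0 T D C, (Polynomial.aeval (-(D * T)) b) w = a (T w)}

/-!
On `V^β` the operator `S` is nilpotent about `-β` modulo `V^{>β}`. If `b(S) w ∈ A0·(T w)` and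
`w ∈ V^β` with `b(-β) ≠ 0`, then both `b(S) w` and `(S + β)^N w` lie in `V^{>β}`, hence so does `w`
by Bézout; since the filtration is discrete, `w` climbs to `V^α` when no root of `b` exceeds `-α`.

Conversely, for `w ∈ V^α` a product of factors `S + β` with `β ≥ α` sends `w` arbitrarily deep into
the filtration, that is into `T^n V^1` for any given `n`. The submodules `{u ∈ V^1 | T^n u ∈ A0·w}`
of the Noetherian module `V^1` form a stationary chain, so `T^(n+1) V^1 ∩ A0·w ⊆ T (A0·w)` for
large `n` (an Artin-Rees argument), and `T (A0·w) ⊆ A0·(T w)`. So `b_w` divides such a product.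
-/

section Polynomial

open Polynomial

lemma VFilt.mem_of_isCoprime_aeval {R M : Type*} [CommRing R] [AddCommGroup M] [Module R M]
    {f : Module.End R M} {W : Submodule R M} (hW : W ≤ W.comap f) {p q : R[X]}
    (hpq : IsCoprime p q) {w : M} (hp : aeval f p w ∈ W) (hq : aeval f q w ∈ W) : w ∈ W := by
  obtain ⟨r, s, hrs⟩ := hpq
  have bezout : aeval f r (aeval f p w) + aeval f s (aeval f q w) = w := by
    simpa using congrArg (fun p => aeval f p w) hrs
  rw [← bezout]
  exact add_mem (aeval_apply_smul_mem_of_le_comap hp r f hW)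
    (aeval_apply_smul_mem_of_le_comap hq s f hW)

variable {K : Type*} [Field K]

lemma VFilt.isCoprime_X_sub_C_of_not_isRoot {p : K[X]} {x : K} (h : ¬ p.IsRoot x) :
    IsCoprime p (X - C x) :=
  ((irreducible_X_sub_C x).coprime_iff_not_dvd.2 (dvd_iff_isRoot.not.2 h)).symm

lemma VFilt.isRoot_prod_X_sub_C_ratCast {L : Multiset ℚ} {x : K} :
    (L.map fun γ : ℚ => X - C (γ : K)).prod.IsRoot x ↔ ∃ γ ∈ L, (γ : K) = x := by
  rw [IsRoot, eval_multiset_prod, Multiset.prod_eq_zero_iff]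
  simp [sub_eq_zero, eq_comm (a := x)]

lemma VFilt.exists_eq_prod_X_sub_C_of_dvd {p : K[X]} (hp : p.Monic) {L : Multiset ℚ}
    (h : p ∣ (L.map fun γ : ℚ => X - C (γ : K)).prod) :
    ∃ L' : Multiset ℚ, p = (L'.map fun γ : ℚ => X - C (γ : K)).prod := by
  have hsplits : (L.map fun γ : ℚ => X - C (γ : K)).prod.Splits :=
    .multisetProd (by simp [Splits.X_sub_C])
  have hne : (L.map fun γ : ℚ => X - C (γ : K)).prod ≠ 0 :=
    (monic_multiset_prod_of_monic _ _ fun γ _ => monic_X_sub_C _).ne_zero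
  have hroots : ∀ x ∈ p.roots, ∃ γ : ℚ, (γ : K) = x := fun x hx =>
    have ⟨γ, _, hγ⟩ := isRoot_prod_X_sub_C_ratCast.1 ((isRoot_of_mem_roots hx).dvd h)
    ⟨γ, hγ⟩
  have : CanLift K ℚ (↑) fun x => ∃ γ : ℚ, (γ : K) = x := ⟨fun _ h => h⟩
  lift p.roots to Multiset ℚ using hroots with L' hL'
  refine ⟨L', ?_⟩
  rw [(hsplits.of_dvd hne h).eq_prod_roots_of_monic hp, ← hL', Multiset.map_map]
  rfl

end Polynomial

section Noetherian

lemma VFilt.exists_semiconjBy_of_mem_adjoin {R A : Type*} [CommSemiring R] [Semiring A]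
    [Algebra R A] {s : Set A} {t : A}
    (h : ∀ x ∈ s, ∃ y ∈ Algebra.adjoin R s, SemiconjBy t x y) {a : A}
    (ha : a ∈ Algebra.adjoin R s) : ∃ b ∈ Algebra.adjoin R s, SemiconjBy t a b := by
  induction ha using Algebra.adjoin_induction with
  | mem x hx => exact h x hx
  | algebraMap r => exact ⟨_, algebraMap_mem _ r, (Algebra.commutes r t).symm⟩
  | add x y _ _ hx hy =>
    obtain ⟨x', hx', hxx'⟩ := hx
    obtain ⟨y', hy', hyy'⟩ := hy
    exact ⟨x' + y', add_mem hx' hy', hxx'.add_right hyy'⟩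
  | mul x y _ _ hx hy =>
    obtain ⟨x', hx', hxx'⟩ := hx
    obtain ⟨y', hy', hyy'⟩ := hy
    exact ⟨x' * y', mul_mem hx' hy', hxx'.mul_right hyy'⟩

variable {R M : Type*} [Ring R] [AddCommGroup M] [Module R M] {t : R}

/-- The submodule `{u | t • u ∈ N}`, for a possibly non-central `t` with `t R ⊆ R t`. Its iterates
from `N` are the ascending chain of the Artin-Rees argument. -/
def VFilt.smulComap (ht : ∀ a : R, ∃ b, SemiconjBy t a b) (N : Submodule R M) :
    Submodule R M where
  carrier := {u | t • u ∈ N}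
  add_mem' hu hv := by
    rw [Set.mem_ofPred_eq, smul_add]
    exact add_mem hu hv
  zero_mem' := by simp
  smul_mem' a u hu := by
    obtain ⟨b, hb⟩ := ht a
    rw [Set.mem_ofPred_eq, smul_smul, hb.eq, mul_smul]
    exact N.smul_mem b hu

lemma VFilt.mem_iterate_smulComap (ht : ∀ a : R, ∃ b, SemiconjBy t a b) (N : Submodule R M)
    (n : ℕ) {u : M} : u ∈ (smulComap ht)^[n] N ↔ t ^ n • u ∈ N := by
  induction n generalizing u with
  | zero => simp
  | succ n ih =>
    rw [Function.iterate_succ_apply', pow_succ, mul_smul, ← ih]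
    rfl

lemma VFilt.monotone_iterate_smulComap (ht : ∀ a : R, ∃ b, SemiconjBy t a b)
    (N : Submodule R M) : Monotone fun n => (smulComap ht)^[n] N :=
  Monotone.monotone_iterate_of_le_map (fun _ _ hle _ hu => hle hu) fun _ hu => N.smul_mem t hu

theorem VFilt.exists_pow_smul_mem_of_pow_succ_smul_mem [IsNoetherianRing R]
    (ht : ∀ a : R, ∃ b, SemiconjBy t a b) {E : Submodule R M} (hE : E.FG)
    (N : Submodule R M) : ∃ n : ℕ, ∀ u ∈ E, t ^ (n + 1) • u ∈ N → t ^ n • u ∈ N := by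
  have : IsNoetherian R E := isNoetherian_of_fg_of_noetherian E hE
  let chain : ℕ →o Submodule R E :=
    ⟨fun n => ((smulComap ht)^[n] N).comap E.subtype,
      fun _ _ h => Submodule.comap_mono (monotone_iterate_smulComap ht N h)⟩
  obtain ⟨n, hn⟩ := monotone_stabilizes_iff_noetherian.2 this chain
  refine ⟨n, fun u hu h => ?_⟩
  have hmem : (⟨u, hu⟩ : E) ∈ chain (n + 1) := (mem_iterate_smulComap ht N _).2 h
  rw [← hn (n + 1) n.le_succ] at hmem
  exact (mem_iterate_smulComap ht N n).1 hmem

theorem VFilt.exists_pow_smul_mem_span_smul [IsNoetherianRing R]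
    (ht : ∀ a : R, ∃ b, SemiconjBy t a b) {E : Submodule R M} (hE : E.FG) (w : M) :
    ∃ n : ℕ, ∀ u ∈ E, t ^ n • u ∈ Submodule.span R {w} →
      t ^ n • u ∈ Submodule.span R {t • w} := by
  obtain ⟨n, hn⟩ := exists_pow_smul_mem_of_pow_succ_smul_mem ht hE (Submodule.span R {w})
  refine ⟨n + 1, fun u hu h => ?_⟩
  obtain ⟨a, ha⟩ := Submodule.mem_span_singleton.1 (hn u hu h)
  obtain ⟨b, hb⟩ := ht a
  refine Submodule.mem_span_singleton.2 ⟨b, ?_⟩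
  rw [smul_smul, ← hb.eq, mul_smul, ha, smul_smul, ← pow_succ']

end Noetherian

section VFiltration

open Polynomial

variable {k : Type*} [Field k]
variable {M : Type*} [AddCommGroup M] [Module k M]
variable {T D : Module.End k M} {G : Set (Module.End k M)} {V : ℚ → Submodule k M}

lemma VFilt.left_mem_A0 : T ∈ A0 T D G :=
  Algebra.subset_adjoin (by simp)

lemma VFilt.neg_mul_mem_A0 : -(D * T) ∈ A0 T D G :=
  Algebra.subset_adjoin (by simp)

lemma VFilt.aeval_mem_A0 (p : k[X]) : aeval (-(D * T)) p ∈ A0 T D G :=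
  Algebra.adjoin_mono (Set.singleton_subset_iff.2 (by simp)) (aeval_mem_adjoin_singleton k _)

lemma VFilt.exists_semiconjBy_A0 (hweyl : D * T - T * D = 1) (hG : ∀ c ∈ G, Commute c T)
    (a : A0 T D G) : ∃ b : A0 T D G, SemiconjBy (⟨T, left_mem_A0⟩ : A0 T D G) a b := by
  have hgen : ∀ x ∈ ({T, -(D * T)} ∪ G : Set (Module.End k M)),
      ∃ y ∈ A0 T D G, SemiconjBy T x y := by
    rintro x ((rfl | rfl) | hx)
    · exact ⟨x, left_mem_A0, SemiconjBy.eq rfl⟩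
    · refine ⟨-(D * T) + 1, add_mem neg_mul_mem_A0 (one_mem _), ?_⟩
      rw [SemiconjBy, ← hweyl]
      noncomm_ring
    · exact ⟨x, Algebra.subset_adjoin (Or.inr hx), (hG x hx).symm⟩
  obtain ⟨b, hb, hab⟩ := exists_semiconjBy_of_mem_adjoin hgen a.2
  exact ⟨⟨b, hb⟩, Subtype.ext hab⟩

lemma VFilt.le_gt {α β : ℚ} (h : α < β) : V β ≤ gt V α :=
  le_iSup₂_of_le β h le_rfl

namespace IsWeakVFiltration

/-- `V^α` as an `A0`-module, so that the left Noetherian property of `A0` applies to it. -/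
def toSubmodule (hV : IsWeakVFiltration T D G V) (α : ℚ) : Submodule (VFilt.A0 T D G) M where
  __ := V α
  smul_mem' a _ hx := hV.stable a a.2 α ⟨_, hx, rfl⟩

lemma gt_le_comap (hV : IsWeakVFiltration T D G V) {a : Module.End k M}
    (ha : a ∈ VFilt.A0 T D G) (α : ℚ) : VFilt.gt V α ≤ (VFilt.gt V α).comap a :=
  iSup₂_le fun β hβ =>
    (Submodule.map_le_iff_le_comap.1 (hV.stable a ha β)).trans
      (Submodule.comap_mono (VFilt.le_gt hβ))

lemma exists_eq_ceil_div (hV : IsWeakVFiltration T D G V) :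
    ∃ ℓ : ℕ, 0 < (ℓ : ℚ) ∧ ∀ α, V α = V (⌈α * ℓ⌉ / ℓ) := by
  obtain ⟨ℓ, hℓ, hconst⟩ := hV.discrete
  have hℓ' : 0 < (ℓ : ℚ) := Nat.cast_pos.2 hℓ
  refine ⟨ℓ, hℓ', fun α => hconst (⌈α * ℓ⌉ - 1) _ _ ⟨?_, ?_⟩ ⟨?_, ?_⟩⟩
  · rw [div_lt_iff₀ hℓ']
    push_cast
    linarith [Int.ceil_lt_add_one (α * ℓ)]
  · rw [le_div_iff₀ hℓ']
    push_cast
    linarith [Int.le_ceil (α * ℓ)]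
  · gcongr
    exact sub_one_lt _
  · simp

theorem induction (hV : IsWeakVFiltration T D G V) {P : Submodule k M → Prop} (hP : Monotone P)
    {α β : ℚ} (hα : P (V α))
    (step : ∀ γ, α ≤ γ → γ < β → P (V γ) → P (VFilt.gt V γ)) : P (V β) := by
  obtain ⟨ℓ, hℓ, hceil⟩ := hV.exists_eq_ceil_div
  have gt_le (i : ℤ) : VFilt.gt V (i / ℓ) ≤ V ((i + 1 : ℤ) / ℓ) := by
    refine iSup₂_le fun γ hγ => ?_
    rw [hceil γ]
    refine hV.antitone ?_
    gcongr
    exact Int.add_one_le_iff.2 (Int.lt_ceil.2 ((div_lt_iff₀ hℓ).1 hγ))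
  have climb (i : ℤ) (hi : ⌈α * ℓ⌉ ≤ i) : i ≤ ⌈β * ℓ⌉ → P (V (i / ℓ)) := by
    induction i, hi using Int.leInduction with
    | base => exact fun _ => hceil α ▸ hα
    | succ i hi ih =>
      intro hiβ
      refine hP (gt_le i) (step _ ?_ ?_ (ih (by lia)))
      · exact (le_div_iff₀ hℓ).2 (Int.ceil_le.1 hi)
      · exact (div_lt_iff₀ hℓ).2 (Int.lt_ceil.1 hiβ)
  rcases le_total β α with h | h
  · exact hP (hV.antitone h) hα
  · rw [hceil β]
    exact climb _ (by gcongr) le_rfl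

lemma exists_aeval_pow_mem_gt (hV : IsWeakVFiltration T D G V) (α : ℚ) :
    ∃ N : ℕ, ∀ u ∈ V α,
      aeval (-(D * T)) ((X - C ((-α : ℚ) : k)) ^ N) u ∈ VFilt.gt V α := by
  obtain ⟨N, -, hN⟩ := hV.nilpotent α
  refine ⟨N, fun u hu => ?_⟩
  simpa [Algebra.algebraMap_eq_smul_one] using hN u hu

theorem exists_aeval_prod_mem (hV : IsWeakVFiltration T D G V) {α : ℚ} {w : M} (hw : w ∈ V α)
    (β : ℚ) :
    ∃ L : Multiset ℚ, (∀ γ ∈ L, γ ≤ -α) ∧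
      aeval (-(D * T)) (L.map fun γ : ℚ => X - C (γ : k)).prod w ∈ V β := by
  refine hV.induction (α := α) (P := fun W => ∃ L : Multiset ℚ, (∀ γ ∈ L, γ ≤ -α) ∧
    aeval (-(D * T)) (L.map fun γ : ℚ => X - C (γ : k)).prod w ∈ W)
    (fun _ _ hle ⟨L, hL, h⟩ => ⟨L, hL, hle h⟩) ⟨0, by simpa using hw⟩ ?_
  rintro γ hαγ - ⟨L, hL, hmem⟩
  obtain ⟨N, hN⟩ := hV.exists_aeval_pow_mem_gt γ
  refine ⟨Multiset.replicate N (-γ) + L, fun δ hδ => ?_, ?_⟩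
  · rcases Multiset.mem_add.1 hδ with hδ | hδ
    · rw [Multiset.eq_of_mem_replicate hδ]
      exact neg_le_neg hαγ
    · exact hL δ hδ
  · rw [Multiset.map_add, Multiset.prod_add, Multiset.map_replicate, Multiset.prod_replicate,
      map_mul, Module.End.mul_apply]
    exact hN _ hmem

end IsWeakVFiltration

namespace IsVFiltration

lemma fg_toSubmodule (hV : IsVFiltration T D G V) (α : ℚ) : (hV.toSubmodule α).FG := by
  obtain ⟨F, hFV, hF⟩ := hV.fg α
  refine ⟨F, le_antisymm (Submodule.span_le.2 hFV) ?_⟩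
  refine hF ((Submodule.span (VFilt.A0 T D G) (F : Set M)).restrictScalars k) ?_
    Submodule.subset_span
  rintro a ha _ ⟨y, hy, rfl⟩
  exact Submodule.smul_mem _ (⟨a, ha⟩ : VFilt.A0 T D G) hy

lemma map_pow_eq (hV : IsVFiltration T D G V) {α : ℚ} (hα : 0 < α) (n : ℕ) :
    (V α).map (T ^ n) = V (α + n) := by
  induction n with
  | zero => simp [Module.End.one_eq_id]
  | succ n ih =>
    rw [pow_succ', Module.End.mul_eq_comp, Submodule.map_comp, ih,
      hV.mapT_eq _ (by positivity), Nat.cast_succ, add_assoc]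

end IsVFiltration

variable [CharZero k]

lemma VFilt.mem_bSet_iff {w : M} {b : k[X]} :
    b ∈ bSet T D G w ↔ aeval (-(D * T)) b w ∈ Submodule.span (A0 T D G) {T w} := by
  rw [Submodule.mem_span_singleton]
  exact ⟨fun ⟨a, ha, h⟩ => ⟨⟨a, ha⟩, h.symm⟩, fun ⟨a, h⟩ => ⟨a, a.2, h.symm⟩⟩

namespace IsWeakVFiltration

lemma aeval_mem_gt_of_mem_bSet (hV : IsWeakVFiltration T D G V) {w : M} {b : k[X]}
    (hb : b ∈ VFilt.bSet T D G w) {β : ℚ} (hw : w ∈ V β) :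
    aeval (-(D * T)) b w ∈ VFilt.gt V β := by
  obtain ⟨a, ha, hab⟩ := hb
  rw [hab]
  have hTw : T w ∈ V (β + 1) := hV.mapT_le β ⟨w, hw, rfl⟩
  exact hV.gt_le_comap ha β (VFilt.le_gt (lt_add_one β) hTw)

theorem mem_gt_of_not_isRoot (hV : IsWeakVFiltration T D G V) {w : M} {b : k[X]}
    (hb : b ∈ VFilt.bSet T D G w) {β : ℚ} (hβ : ¬ b.IsRoot ((-β : ℚ) : k)) (hw : w ∈ V β) :
    w ∈ VFilt.gt V β := by
  obtain ⟨N, hN⟩ := hV.exists_aeval_pow_mem_gt β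
  exact VFilt.mem_of_isCoprime_aeval (hV.gt_le_comap VFilt.neg_mul_mem_A0 β)
    (VFilt.isCoprime_X_sub_C_of_not_isRoot hβ).pow_right
    (hV.aeval_mem_gt_of_mem_bSet hb hw) (hN w hw)

theorem mem_of_mem_bSet (hV : IsWeakVFiltration T D G V) {w : M} {b : k[X]}
    (hb : b ∈ VFilt.bSet T D G w) {α : ℚ} (hroots : ∀ γ : ℚ, b.IsRoot (γ : k) → γ ≤ -α) :
    w ∈ V α := by
  obtain ⟨β, hβ⟩ := hV.exhaustive w
  refine hV.induction (P := fun W => w ∈ W) (fun _ _ hle h => hle h) hβ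
    fun γ _ hγα => hV.mem_gt_of_not_isRoot hb fun hroot => ?_
  exact hγα.not_ge (neg_le_neg_iff.1 (hroots _ hroot))

end IsWeakVFiltration

theorem IsVFiltration.exists_prod_mem_bSet (hV : IsVFiltration T D G V) (hweyl : D * T - T * D = 1)
    (hG : ∀ c ∈ G, Commute c T) [IsNoetherianRing (VFilt.A0 T D G)] {α : ℚ} {w : M}
    (hw : w ∈ V α) :
    ∃ L : Multiset ℚ, (∀ γ ∈ L, γ ≤ -α) ∧
      (L.map fun γ : ℚ => X - C (γ : k)).prod ∈ VFilt.bSet T D G w := by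
  obtain ⟨n, artinRees⟩ := VFilt.exists_pow_smul_mem_span_smul
    (VFilt.exists_semiconjBy_A0 hweyl hG) (hV.fg_toSubmodule 1) w
  obtain ⟨L, hL, hmem⟩ := hV.exists_aeval_prod_mem hw (1 + n)
  rw [← hV.map_pow_eq one_pos] at hmem
  obtain ⟨u, hu, hTu⟩ := hmem
  have hspan : (T ^ n) u ∈ Submodule.span (VFilt.A0 T D G) {w} :=
    Submodule.mem_span_singleton.2 ⟨⟨_, VFilt.aeval_mem_A0 _⟩, hTu.symm⟩
  refine ⟨L, hL, VFilt.mem_bSet_iff.2 ?_⟩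
  rw [← hTu]
  exact artinRees u hu hspan

end VFiltration

theorem stmt14_general {k : Type*} [Field k] [CharZero k]
    {M : Type*} [AddCommGroup M] [Module k M]
    (T D : Module.End k M) (C : Set (Module.End k M))
    (hweyl : D * T - T * D = 1) (hC : ∀ c ∈ C, Commute c T)
    (hNoeth : IsNoetherianRing ↥(VFilt.A0 T D C))
    (V : ℚ → Submodule k M) (hV : IsVFiltration T D C V)
    (w : M) (bw : Polynomial k) (hmonic : bw.Monic) (hbw : bw ∈ VFilt.bSet T D C w)
    (hdvd : ∀ c ∈ VFilt.bSet T D C w, bw ∣ c) :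
    (∃ L : Multiset ℚ, bw = (L.map fun γ : ℚ => Polynomial.X - Polynomial.C (γ : k)).prod) ∧
      ∀ α : ℚ, w ∈ V α ↔ ∀ γ : ℚ, bw.IsRoot (γ : k) → γ ≤ -α := by
  refine ⟨?_, fun α => ⟨fun hw γ hγ => ?_, hV.mem_of_mem_bSet hbw⟩⟩
  · obtain ⟨α, hw⟩ := hV.exhaustive w
    obtain ⟨L, -, hL⟩ := hV.exists_prod_mem_bSet hweyl hC hw
    exact VFilt.exists_eq_prod_X_sub_C_of_dvd hmonic (hdvd _ hL)
  · obtain ⟨L, hLα, hL⟩ := hV.exists_prod_mem_bSet hweyl hC hw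
    obtain ⟨δ, hδ, hδγ⟩ := VFilt.isRoot_prod_X_sub_C_ratCast.1 (hγ.dvd (hdvd _ hL))
    exact Rat.cast_injective hδγ ▸ hLα δ hδ

/-- **Corollary 4.8 (Sabbah).** If `A0` is left Noetherian and `M` admits a `V`-filtration,
then `w ∈ V^α` if and only if all roots of the `b`-function `b_w` of `w` are `≤ -α`. -/
theorem stmt14 {k : Type*} [Field k] [CharZero k]
    {M : Type*} [AddCommGroup M] [Module k M]
    (T D : Module.End k M) (C : Set (Module.End k M))
    (hweyl : D * T - T * D = 1)
    (hC : ∀ c ∈ C, Commute c T ∧ Commute c D)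
    (hNoeth : IsNoetherianRing ↥(VFilt.A0 T D C))
    (V : ℚ → Submodule k M) (hV : IsVFiltration T D C V) :
    ∀ (α : ℚ) (w : M) (bw : Polynomial k) (L : Multiset ℚ),
      bw.Monic → bw ∈ VFilt.bSet T D C w → (∀ c ∈ VFilt.bSet T D C w, bw ∣ c) →
      bw = (L.map fun γ : ℚ => Polynomial.X - Polynomial.C (γ : k)).prod →
      (w ∈ V α ↔ ∀ γ ∈ L, γ ≤ -α) := by
  intro α w bw L hmonic hbw hdvd hL
  rw [(stmt14_general T D C hweyl (fun c hc => (hC c hc).1) hNoeth V hV w bw hmonic hbw hdvd).2 α]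
  simp only [hL, VFilt.isRoot_prod_X_sub_C_ratCast, Rat.cast_inj, exists_eq_right]
end

section
/- For every nonzero weighted-homogeneous polynomial h ∈ R, of weighted degree ρ(h), the element (∏_{λ ∈ Σ(f), λ ≥ ρ(h)} (X + (λ + |w|))) · h of N lies in the smallest D-stable k-subspace of N containing the image of J_f (i.e., the product ∏_{λ∈Σ(f), λ≥ρ(h)}(s + λ + |w|)·h f^s belongs to D_R·J_f f^s). -/
/-!
The Euler operator `E = ∑ wᵢ xᵢ ∂ᵢ` acts on `h f^s` as `ρ(h) + s`, so `E + |w| = ∑ wᵢ ∂ᵢ xᵢ` acts as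
`s + ρ(h) + |w|`. Hence multiplying `h f^s` by the factor for `λ = ρ(h)` rewrites it as
`∑ wᵢ ∂ᵢ (xᵢ h f^s)`, where the `xᵢ h` have larger weighted degree and fewer factors remain.
The induction stops at polynomials in `J_f`: there `s = E - ρ(h)` on `h f^s`, so that `D_R` itself
supplies all further factors.
-/

section CommutingEndomorphisms

variable {k M : Type*} [CommSemiring k] [AddCommMonoid M] [Module k M]

lemma commute_aeval_left {A : Type*} [Semiring A] [Algebra k A] {a b : A} (hab : Commute a b)
    (P : Polynomial k) : Commute (Polynomial.aeval a P) b :=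
  (Algebra.commute_of_mem_adjoin_singleton_of_commute
    (Polynomial.aeval_mem_adjoin_singleton k a) hab.symm).symm

lemma aeval_apply_eq_of_commute {s t : Module.End k M} (hst : Commute s t) {v : M}
    (hv : s v = t v) (P : Polynomial k) :
    Polynomial.aeval s P v = Polynomial.aeval t P v := by
  have pow_apply_eq (m : ℕ) : (s ^ m) v = (t ^ m) v := by
    induction m with
    | zero => rfl
    | succ m ih =>
      calc (s ^ (m + 1)) v = s ((t ^ m) v) := by rw [pow_succ', Module.End.mul_apply, ih]
        _ = (t ^ m) (s v) := LinearMap.congr_fun (hst.pow_right m).eq v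
        _ = (t ^ (m + 1)) v := by rw [hv, pow_succ, Module.End.mul_apply]
  induction P using Polynomial.induction_on' with
  | add p q hp hq => simp only [map_add, LinearMap.add_apply, hp, hq]
  | monomial m a =>
    simp only [Polynomial.aeval_monomial, Module.End.mul_apply, pow_apply_eq]

lemma aeval_apply_mem_of_commute {s t : Module.End k M} (hst : Commute s t) {W : Submodule k M}
    (htW : ∀ u ∈ W, t u ∈ W) {v : M} (hvW : v ∈ W) (hv : s v = t v) (P : Polynomial k) :
    Polynomial.aeval s P v ∈ W := by
  rw [aeval_apply_eq_of_commute hst hv]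
  exact Polynomial.aeval_apply_smul_mem_of_le_comap hvW P t htW

end CommutingEndomorphisms

section WeightedDegrees

variable {k σ Γ : Type*} [CommSemiring k] [AddCommMonoid Γ]

lemma sum_map_weight_smul_X_mul_pderiv [Fintype σ] (ι : Γ →+ k) {w : σ → Γ} {ρ : Γ}
    {h : MvPolynomial σ k} (hh : h.IsWeightedHomogeneous w ρ) :
    ∑ i, ι (w i) • (MvPolynomial.X i * MvPolynomial.pderiv i h) = ι ρ • h := by
  induction hh using MvPolynomial.IsWeightedHomogeneous.induction_on with
  | zero => simp
  | add p q _ _ ihp ihq => simp [mul_add, Finset.sum_add_distrib, ihp, ihq]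
  | monomial d r hd =>
    simp_rw [MvPolynomial.X_mul_pderiv_monomial, ← hd, Finsupp.weight_eq_sum, map_sum, map_nsmul,
      Finset.sum_smul]
    exact Finset.sum_congr rfl fun i _ => by rw [smul_comm, smul_assoc]

/-- The weighted degrees `Σ` attained by weighted homogeneous polynomials outside `J`; for
`J = J_f` this is the set `Σ(f)`. -/
def weightSpectrum (w : σ → Γ) (J : Ideal (MvPolynomial σ k)) : Set Γ :=
  {q | ∃ g : MvPolynomial σ k, g ∉ J ∧ g.IsWeightedHomogeneous w q}

end WeightedDegrees

section ParametricConnections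

variable {k σ M : Type*} [CommRing k] [AddCommGroup M] [Module k M]
  [Module (MvPolynomial σ k) M] [IsScalarTower k (MvPolynomial σ k) M]

/-- The endomorphisms `L i` form a connection on the `k[xᵢ]`-module `M`, linear in a parameter `s`
acting on `M`. This captures the action of `D_R[s]` on `R_f[s] f^s`; the connection is not required
to be integrable. -/
structure IsParametricConnection (L : σ → Module.End k M) (s : Module.End k M) : Prop where
  leibniz (i : σ) (r : MvPolynomial σ k) (u : M) :
    L i (r • u) = MvPolynomial.pderiv i r • u + r • L i u
  commute_connection (i : σ) : Commute s (L i)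
  commute_smul (r : MvPolynomial σ k) : Commute s (Algebra.lsmul k k M r)

/-- The Euler operator `∑ cᵢ xᵢ Lᵢ` of a connection `L`, with coefficients `c` in the base ring. -/
noncomputable def eulerOperator [Fintype σ] (c : σ → k) (L : σ → Module.End k M) :
    Module.End k M :=
  ∑ i, c i • (Algebra.lsmul k k M (MvPolynomial.X i : MvPolynomial σ k) * L i)

lemma eulerOperator_apply [Fintype σ] (c : σ → k) (L : σ → Module.End k M) (u : M) :
    eulerOperator c L u = ∑ i, c i • (MvPolynomial.X i : MvPolynomial σ k) • L i u := by
  simp [eulerOperator]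

lemma eulerOperator_mem [Fintype σ] {L : σ → Module.End k M} {W : Submodule k M}
    (hX : ∀ i, ∀ u ∈ W, (MvPolynomial.X i : MvPolynomial σ k) • u ∈ W)
    (hLW : ∀ i, ∀ u ∈ W, L i u ∈ W) (c : σ → k) {u : M} (hu : u ∈ W) :
    eulerOperator c L u ∈ W := by
  rw [eulerOperator_apply]
  exact W.sum_mem fun i _ => W.smul_mem _ (hX i _ (hLW i _ hu))

namespace IsParametricConnection

variable {L : σ → Module.End k M} {s : Module.End k M}

lemma aeval_connection_apply (H : IsParametricConnection L s) (P : Polynomial k) (i : σ) (u : M) :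
    Polynomial.aeval s P (L i u) = L i (Polynomial.aeval s P u) :=
  LinearMap.congr_fun (commute_aeval_left (H.commute_connection i) P).eq u

variable [Fintype σ]

lemma commute_eulerOperator (H : IsParametricConnection L s) (c : σ → k) :
    Commute s (eulerOperator c L) :=
  Commute.sum_right _ _ _ fun i _ =>
    ((H.commute_smul (MvPolynomial.X i)).mul_right (H.commute_connection i)).smul_right (c i)

lemma sum_smul_connection_X_smul (H : IsParametricConnection L s) (c : σ → k) (u : M) :
    ∑ i, c i • L i ((MvPolynomial.X i : MvPolynomial σ k) • u) =
      eulerOperator c L u + (∑ i, c i) • u := by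
  simp_rw [H.leibniz, MvPolynomial.pderiv_X_self, one_smul, smul_add, Finset.sum_add_distrib,
    eulerOperator_apply, Finset.sum_smul, add_comm]

variable {Γ : Type*} [AddCommMonoid Γ] {ι : Γ →+ k} {w : σ → Γ}

lemma eulerOperator_smul (H : IsParametricConnection L s) {h : MvPolynomial σ k} {ρ : Γ}
    (hh : h.IsWeightedHomogeneous w ρ) (u : M) :
    eulerOperator (ι ∘ w) L (h • u) = ι ρ • h • u + h • eulerOperator (ι ∘ w) L u := by
  have euler := congrArg (· • u) (sum_map_weight_smul_X_mul_pderiv ι hh)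
  simp only [Finset.sum_smul, smul_assoc, mul_smul] at euler
  simp only [eulerOperator_apply, Function.comp_apply, H.leibniz, smul_add,
    Finset.sum_add_distrib, euler, Finset.smul_sum]
  congr 1
  refine Finset.sum_congr rfl fun i _ => ?_
  rw [smul_comm h (ι (w i)), smul_comm h (MvPolynomial.X i)]

lemma eulerOperator_smul_of_apply_eq (H : IsParametricConnection L s) {u₀ : M}
    (hu₀ : eulerOperator (ι ∘ w) L u₀ = s u₀) {h : MvPolynomial σ k} {ρ : Γ}
    (hh : h.IsWeightedHomogeneous w ρ) :
    eulerOperator (ι ∘ w) L (h • u₀) = ι ρ • h • u₀ + s (h • u₀) := by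
  have s_smul : s (h • u₀) = h • s u₀ := LinearMap.congr_fun (H.commute_smul h).eq u₀
  rw [H.eulerOperator_smul hh, hu₀, s_smul]

lemma aeval_X_add_C_smul (H : IsParametricConnection L s) {u₀ : M}
    (hu₀ : eulerOperator (ι ∘ w) L u₀ = s u₀) {h : MvPolynomial σ k} {ρ : Γ}
    (hh : h.IsWeightedHomogeneous w ρ) :
    Polynomial.aeval s (Polynomial.X + Polynomial.C (ι (ρ + ∑ i, w i))) (h • u₀) =
      ∑ i, ι (w i) • L i ((MvPolynomial.X i * h) • u₀) := by
  have sum_eq := H.sum_smul_connection_X_smul (ι ∘ w) (h • u₀)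
  simp only [Function.comp_apply, ← mul_smul] at sum_eq
  rw [sum_eq, H.eulerOperator_smul_of_apply_eq hu₀ hh, map_add, Polynomial.aeval_X,
    Polynomial.aeval_C, LinearMap.add_apply, Module.algebraMap_end_apply, map_add, map_sum,
    add_smul]
  abel

variable {W : Submodule k M}

lemma aeval_smul_mem (H : IsParametricConnection L s) {u₀ : M}
    (hu₀ : eulerOperator (ι ∘ w) L u₀ = s u₀)
    (hX : ∀ i, ∀ u ∈ W, (MvPolynomial.X i : MvPolynomial σ k) • u ∈ W)
    (hLW : ∀ i, ∀ u ∈ W, L i u ∈ W) {h : MvPolynomial σ k} {ρ : Γ}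
    (hh : h.IsWeightedHomogeneous w ρ) (hhW : h • u₀ ∈ W) (P : Polynomial k) :
    Polynomial.aeval s P (h • u₀) ∈ W := by
  refine aeval_apply_mem_of_commute (t := eulerOperator (ι ∘ w) L - algebraMap k _ (ι ρ))
    ((H.commute_eulerOperator _).sub_right (Algebra.commute_algebraMap_right _ _))
    (fun u hu => W.sub_mem (eulerOperator_mem hX hLW _ hu) (W.smul_mem _ hu)) hhW ?_ P
  rw [LinearMap.sub_apply, Module.algebraMap_end_apply, H.eulerOperator_smul_of_apply_eq hu₀ hh,
    add_sub_cancel_left]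

theorem aeval_prod_smul_mem [PartialOrder Γ] [IsOrderedCancelAddMonoid Γ]
    (H : IsParametricConnection L s) (hw : ∀ i, 0 < w i) {u₀ : M}
    (hu₀ : eulerOperator (ι ∘ w) L u₀ = s u₀)
    (hX : ∀ i, ∀ u ∈ W, (MvPolynomial.X i : MvPolynomial σ k) • u ∈ W)
    (hLW : ∀ i, ∀ u ∈ W, L i u ∈ W) {J : Ideal (MvPolynomial σ k)} (hJ : ∀ r ∈ J, r • u₀ ∈ W)
    {h : MvPolynomial σ k} {ρ : Γ} (hh : h.IsWeightedHomogeneous w ρ)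
    {S : Finset Γ} (hS : weightSpectrum w J ∩ Set.Ici ρ ⊆ S) :
    Polynomial.aeval s (∏ q ∈ S, (Polynomial.X + Polynomial.C (ι (q + ∑ i, w i)))) (h • u₀) ∈
      W := by
  classical
  induction S using Finset.strongInduction generalizing h ρ with
  | H S ih =>
    by_cases hhJ : h ∈ J
    · exact H.aeval_smul_mem hu₀ hX hLW hh (hJ h hhJ) _
    have hρS : ρ ∈ S := hS ⟨⟨h, hhJ, hh⟩, Set.self_mem_Ici⟩
    have X_mul_mem (i : σ) : Polynomial.aeval s (∏ q ∈ S.erase ρ, (Polynomial.X +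
        Polynomial.C (ι (q + ∑ i, w i)))) ((MvPolynomial.X i * h) • u₀) ∈ W := by
      refine ih _ (Finset.erase_ssubset hρS)
        ((MvPolynomial.isWeightedHomogeneous_X k w i).mul hh) fun q ⟨hq, hle⟩ => ?_
      have hlt : ρ < q := (lt_add_of_pos_left ρ (hw i)).trans_le hle
      exact Finset.mem_erase.mpr ⟨hlt.ne', hS ⟨hq, hlt.le⟩⟩
    rw [← Finset.prod_erase_mul S _ hρS, map_mul, Module.End.mul_apply,
      H.aeval_X_add_C_smul hu₀ hh, map_sum]
    refine W.sum_mem fun i _ => ?_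
    rw [map_smul, H.aeval_connection_apply]
    exact W.smul_mem _ (hLW i _ (X_mul_mem i))

end IsParametricConnection

end ParametricConnections

section TwistedDerivations

variable {k A : Type*} [CommRing k] [CommRing A] [Algebra k A]

/-- `T` is the operator `D + p` on `A[X]`, where the derivation `D` of `A` acts coefficientwise and
the polynomial `p` by multiplication. For `p = X f⁻¹ D(f)` this is the action of `D` on
`A[s] f^s`. -/
def IsTwistedDerivation (D : Derivation k A A) (p : Polynomial A)
    (T : Module.End k (Polynomial A)) : Prop :=
  ∀ (a : A) (m : ℕ), T (Polynomial.C a * Polynomial.X ^ m) =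
    Polynomial.C (D a) * Polynomial.X ^ m + p * (Polynomial.C a * Polynomial.X ^ m)

namespace IsTwistedDerivation

variable {D : Derivation k A A} {p : Polynomial A} {T : Module.End k (Polynomial A)}

lemma map_one (hT : IsTwistedDerivation D p T) : T 1 = p := by
  simpa using hT 1 0

lemma map_X_mul (hT : IsTwistedDerivation D p T) (u : Polynomial A) :
    T (Polynomial.X * u) = Polynomial.X * T u := by
  induction u using Polynomial.induction_on' with
  | add u v hu hv => simp only [mul_add, map_add, hu, hv]
  | monomial m a =>
    rw [← Polynomial.C_mul_X_pow_eq_monomial, mul_left_comm, ← pow_succ', hT, hT]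
    ring

lemma map_C_mul (hT : IsTwistedDerivation D p T) (b : A) (u : Polynomial A) :
    T (Polynomial.C b * u) = Polynomial.C (D b) * u + Polynomial.C b * T u := by
  induction u using Polynomial.induction_on' with
  | add u v hu hv =>
    rw [mul_add, map_add, hu, hv, map_add]
    ring
  | monomial m a =>
    rw [← Polynomial.C_mul_X_pow_eq_monomial, ← mul_assoc, ← Polynomial.C_mul, hT, hT,
      D.leibniz]
    simp only [smul_eq_mul, Polynomial.C_mul, Polynomial.C_add]
    ring

variable {σ : Type*} [Algebra (MvPolynomial σ k) A] [IsScalarTower k (MvPolynomial σ k) A]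

lemma isParametricConnection {pd : σ → Derivation k A A}
    (hpd : ∀ i r, pd i (algebraMap (MvPolynomial σ k) A r) =
      algebraMap (MvPolynomial σ k) A (MvPolynomial.pderiv i r))
    {p : σ → Polynomial A} {L : σ → Module.End k (Polynomial A)}
    (hL : ∀ i, IsTwistedDerivation (pd i) (p i) (L i)) :
    IsParametricConnection L (Algebra.lmul k (Polynomial A) Polynomial.X) where
  leibniz i r u := by
    simp only [Algebra.smul_def, Polynomial.algebraMap_apply, (hL i).map_C_mul, hpd]
  commute_connection i := LinearMap.ext fun u => ((hL i).map_X_mul u).symm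
  commute_smul r := LinearMap.ext fun u => mul_smul_comm r Polynomial.X u

lemma eulerOperator_one [Fintype σ] {Γ : Type*} [AddCommMonoid Γ] {ι : Γ →+ k} {w : σ → Γ}
    {f : MvPolynomial σ k} {δ : Γ} (hf : f.IsWeightedHomogeneous w δ) (hδ : ι δ = 1)
    [IsLocalization.Away f A] {pd : σ → Derivation k A A} {L : σ → Module.End k (Polynomial A)}
    (hL : ∀ i, IsTwistedDerivation (pd i)
      (Polynomial.X * Polynomial.C (IsLocalization.Away.invSelf f *
        algebraMap (MvPolynomial σ k) A (MvPolynomial.pderiv i f))) (L i)) :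
    eulerOperator (ι ∘ w) L 1 = Polynomial.X := by
  have euler : ∑ i, ι (w i) • (MvPolynomial.X i * MvPolynomial.pderiv i f) = f := by
    rw [sum_map_weight_smul_X_mul_pderiv ι hf, hδ, one_smul]
  calc eulerOperator (ι ∘ w) L 1
      = Polynomial.X * Polynomial.C (algebraMap (MvPolynomial σ k) A
          (∑ i, ι (w i) • (MvPolynomial.X i * MvPolynomial.pderiv i f)) *
            IsLocalization.Away.invSelf f) := by
        simp only [eulerOperator_apply, (hL _).map_one, Function.comp_apply, map_sum,
          Finset.sum_mul, Finset.mul_sum]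
        refine Finset.sum_congr rfl fun i _ => ?_
        simp only [Algebra.smul_def, Polynomial.algebraMap_apply, map_mul,
          ← IsScalarTower.algebraMap_apply]
        ring
    _ = Polynomial.X := by
        rw [euler, IsLocalization.Away.mul_invSelf, Polynomial.C_1, mul_one]

end IsTwistedDerivation

end TwistedDerivations

-- `ι` evaluates weighted degrees in `k`, as the cast `ℚ → k` does for rational weights.
theorem stmt15_general {k σ Γ A : Type*} [CommRing k] [Fintype σ] [AddCommMonoid Γ]
    [PartialOrder Γ] [IsOrderedCancelAddMonoid Γ] [CommRing A] [Algebra k A]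
    [Algebra (MvPolynomial σ k) A] [IsScalarTower k (MvPolynomial σ k) A]
    (ι : Γ →+ k) {w : σ → Γ} (hw : ∀ i, 0 < w i)
    {f : MvPolynomial σ k} {δ : Γ} (hf : f.IsWeightedHomogeneous w δ) (hδ : ι δ = 1)
    [IsLocalization.Away f A] {J : Ideal (MvPolynomial σ k)}
    {pd : σ → Derivation k A A}
    (hpd : ∀ i r, pd i (algebraMap (MvPolynomial σ k) A r) =
      algebraMap (MvPolynomial σ k) A (MvPolynomial.pderiv i r))
    {L : σ → Module.End k (Polynomial A)}
    (hL : ∀ i, IsTwistedDerivation (pd i)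
      (Polynomial.X * Polynomial.C (IsLocalization.Away.invSelf f *
        algebraMap (MvPolynomial σ k) A (MvPolynomial.pderiv i f))) (L i))
    {h : MvPolynomial σ k} {ρ : Γ} (hh : h.IsWeightedHomogeneous w ρ)
    {S : Finset Γ} (hS : weightSpectrum w J ∩ Set.Ici ρ ⊆ S)
    {W : Submodule k (Polynomial A)}
    (hX : ∀ i, ∀ u ∈ W,
      Polynomial.C (algebraMap (MvPolynomial σ k) A (MvPolynomial.X i)) * u ∈ W)
    (hLW : ∀ i, ∀ u ∈ W, L i u ∈ W)
    (hJ : ∀ r ∈ J, Polynomial.C (algebraMap (MvPolynomial σ k) A r) ∈ W) :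
    (∏ q ∈ S, (Polynomial.X + Polynomial.C (algebraMap k A (ι (q + ∑ i, w i))))) *
      Polynomial.C (algebraMap (MvPolynomial σ k) A h) ∈ W := by
  have smul_eq (r : MvPolynomial σ k) (u : Polynomial A) :
      r • u = Polynomial.C (algebraMap (MvPolynomial σ k) A r) * u := by
    rw [Algebra.smul_def, Polynomial.algebraMap_apply]
  have mem := (IsTwistedDerivation.isParametricConnection hpd hL).aeval_prod_smul_mem hw
    (u₀ := 1) (ι := ι) (W := W) (J := J) (S := S)
    ((IsTwistedDerivation.eulerOperator_one hf hδ hL).trans (mul_one _).symm)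
    (by simpa only [smul_eq] using hX) hLW (by simpa only [smul_eq, mul_one] using hJ) hh hS
  rw [Polynomial.aeval_algHom_apply] at mem
  simpa [smul_eq, map_prod, Polynomial.algebraMap_apply] using mem

/-- **Lemma (Section 5, `lem_form_qhomog`).** Let `f ∈ R = k[x₁,…,xₙ]` be weighted
homogeneous of weighted degree `1` with an isolated singularity, and let `h` be a nonzero
weighted homogeneous polynomial of weighted degree `ρ(h)`. Then, in the model
`N = R_f[X]` of `R_f[s]f^s`, the element
`(∏_{λ ∈ Σ(f), λ ≥ ρ(h)} (s + λ + |w|))·h·f^s` lies in the smallest `D_R`-stable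
`k`-subspace of `N` containing the image of `J_f`, i.e. in `D_R·J_f f^s`. -/
theorem stmt15 {k : Type*} [Field k] [IsAlgClosed k] [CharZero k]
    (n : ℕ) (hn : 1 ≤ n)
    (w : Fin n → ℚ) (hw : ∀ i, 0 < w i)
    (f : MvPolynomial (Fin n) k) (hf0 : f ≠ 0)
    (hfhom : f.IsWeightedHomogeneous w 1)
    -- the Jacobian ideal
    (Jf : Ideal (MvPolynomial (Fin n) k))
    (hJf : Jf = Ideal.span (Set.range fun i : Fin n => MvPolynomial.pderiv i f))
    -- isolated singularity: `R/J_f` is finite dimensional over `k`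
    (hfd : FiniteDimensional k (MvPolynomial (Fin n) k ⧸ Jf))
    -- the unique extensions of the partial derivatives to `k`-derivations of `R_f`
    (pd : Fin n → Derivation k (Localization.Away f) (Localization.Away f))
    (hpd : ∀ (i : Fin n) (r : MvPolynomial (Fin n) k),
      pd i (algebraMap (MvPolynomial (Fin n) k) (Localization.Away f) r) =
        algebraMap (MvPolynomial (Fin n) k) (Localization.Away f)
          (MvPolynomial.pderiv i r))
    -- the twisted operators `L_i(u) = ∂_i(u) + X·f⁻¹·(∂f/∂x_i)·u`,
    -- with `∂_i` acting coefficientwise on `N = R_f[X]`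
    (L : Fin n → Module.End k (Polynomial (Localization.Away f)))
    (hL : ∀ (i : Fin n) (a : Localization.Away f) (m : ℕ),
      L i (Polynomial.C a * Polynomial.X ^ m) =
        Polynomial.C (pd i a) * Polynomial.X ^ m +
          Polynomial.X * Polynomial.C (IsLocalization.Away.invSelf f *
            algebraMap (MvPolynomial (Fin n) k) (Localization.Away f)
              (MvPolynomial.pderiv i f)) *
            (Polynomial.C a * Polynomial.X ^ m))
    -- the algebra of operators coming from `D_R`
    (Dalg : Subalgebra k (Module.End k (Polynomial (Localization.Away f))))
    (hDalg : Dalg = Algebra.adjoin k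
      ((Set.range fun r : MvPolynomial (Fin n) k =>
          (LinearMap.mulLeft k (Polynomial.C
              (algebraMap (MvPolynomial (Fin n) k) (Localization.Away f) r)) :
            Module.End k (Polynomial (Localization.Away f)))) ∪
        Set.range L))
    -- the set `Σ(f)` of weighted degrees of weighted homogeneous polynomials not in `J_f`
    (Sigf : Set ℚ)
    (hSigf : Sigf = {q : ℚ | ∃ g : MvPolynomial (Fin n) k,
      g ∉ Jf ∧ g.IsWeightedHomogeneous w q})
    -- the data of the statement
    (h : MvPolynomial (Fin n) k) (ρh : ℚ) (hh0 : h ≠ 0)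
    (hhhom : h.IsWeightedHomogeneous w ρh)
    -- `S` enumerates `{λ ∈ Σ(f) : λ ≥ ρ(h)}` (a finite set)
    (S : Finset ℚ) (hS : ∀ q : ℚ, q ∈ S ↔ q ∈ Sigf ∧ ρh ≤ q) :
    ∀ W : Submodule k (Polynomial (Localization.Away f)),
      (∀ a ∈ Dalg, W.map a ≤ W) →
      (∀ r ∈ Jf, (Polynomial.C
        (algebraMap (MvPolynomial (Fin n) k) (Localization.Away f) r) :
          Polynomial (Localization.Away f)) ∈ W) →
      (∏ lam ∈ S, (Polynomial.X + Polynomial.C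
          (algebraMap k (Localization.Away f) ((lam + ∑ i, w i : ℚ) : k)))) *
        Polynomial.C (algebraMap (MvPolynomial (Fin n) k) (Localization.Away f) h) ∈ W := by
  subst hDalg hSigf
  intro W hW hJ
  exact stmt15_general (Rat.castHom k).toAddMonoidHom hw hfhom Rat.cast_one hpd hL hhhom
    (fun q hq => (hS q).2 hq)
    (fun i u hu => hW _ (Algebra.subset_adjoin (.inl ⟨MvPolynomial.X i, rfl⟩)) ⟨u, hu, rfl⟩)
    (fun i u hu => hW _ (Algebra.subset_adjoin (.inr ⟨i, rfl⟩)) ⟨u, hu, rfl⟩) hJ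
end

section
/- The set {a ∈ D : a(1) = 0} (the annihilator of f^s, where 1 ∈ N represents f^s) is a left ideal of the ring D, and it is equal to the left ideal of D generated by the operators mult_{∂f/∂x_i} ∘ L_j − mult_{∂f/∂x_j} ∘ L_i for 1 ≤ i < j ≤ n. -/
/-!
Filter the operators by order. If `P` has order at most `d` with principal symbol `F(x, y)`,
homogeneous of degree `d` in `y`, then the coefficient of `s^d f^s` in `P f^s` is `F(x, f⁻¹ ∂f)`,
which is `f⁻ᵈ F(x, ∂f)`. So the principal symbol of an operator annihilating `f^s` is a polynomial
relation among the partial derivatives of `f`. Since these form a regular sequence, the ideal they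
generate is of linear type: every homogeneous relation is a combination of the Koszul relations
`∂ᵢf yⱼ - ∂ⱼf yᵢ`. These are the symbols of the operators `∂ᵢf ∂ⱼ - ∂ⱼf ∂ᵢ`, which annihilate `f^s`,
so subtracting a combination of them from `P` lowers its order, and one concludes by induction.
-/

namespace Yano

section KoszulIdeal

open MvPolynomial

attribute [local instance] MvPolynomial.gradedAlgebra

variable {σ R : Type*} [CommRing R]

/-- The ideal of `R[y]` generated by the Koszul relations `aᵢ yⱼ - aⱼ yᵢ`: the evident relations
satisfied by the generators `aᵢ t` of the Rees algebra of the ideal `(a)`. -/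
noncomputable def koszulIdeal (a : σ → R) : Ideal (MvPolynomial σ R) :=
  Ideal.span (Set.range fun p : σ × σ => C (a p.1) * X p.2 - C (a p.2) * X p.1)

theorem isHomogeneous_koszul (a : σ → R) (i j : σ) :
    (C (a i) * X j - C (a j) * X i : MvPolynomial σ R).IsHomogeneous 1 :=
  (isHomogeneous_C_mul_X _ _).sub (isHomogeneous_C_mul_X _ _)

theorem homogeneousComponent_add_mul_of_isHomogeneous {d e : ℕ} {v : MvPolynomial σ R}
    (hv : v.IsHomogeneous e) (c : MvPolynomial σ R) :
    homogeneousComponent (d + e) (c * v) = homogeneousComponent d c * v := by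
  have h := DirectSum.coe_decompose_mul_add_of_right_mem (homogeneousSubmodule σ R)
    (i := d) (a := c) ((mem_homogeneousSubmodule e v).2 hv)
  simp only [← decomposition.decompose'_apply]
  exact h

theorem isHomogeneous_span_X_sup_koszulIdeal (a : σ → R) (s : Set σ) :
    (Ideal.span (X '' s) ⊔ koszulIdeal a).IsHomogeneous (homogeneousSubmodule σ R) := by
  refine .sup (Ideal.homogeneous_span _ _ ?_) (Ideal.homogeneous_span _ _ ?_)
  · rintro _ ⟨i, -, rfl⟩
    exact ⟨1, isHomogeneous_X R i⟩
  · rintro _ ⟨⟨i, j⟩, rfl⟩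
    exact ⟨1, isHomogeneous_koszul a i j⟩

theorem aeval_mem_span_of_mem_span_X_sup_koszulIdeal {a : σ → R} {s : Set σ}
    {F : MvPolynomial σ R} (hF : F ∈ Ideal.span (X '' s) ⊔ koszulIdeal a) :
    aeval a F ∈ Ideal.span (a '' s) := by
  suffices h : Ideal.span (X '' s) ⊔ koszulIdeal a ≤ (Ideal.span (a '' s)).comap (aeval a) from
    h hF
  refine sup_le (Ideal.span_le.2 ?_) (Ideal.span_le.2 ?_)
  · rintro _ ⟨i, hi, rfl⟩
    simpa using Ideal.subset_span (Set.mem_image_of_mem a hi)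
  · rintro _ ⟨⟨i, j⟩, rfl⟩
    simp [mul_comm]

theorem X_mul_C_mem_span_X_sup_koszulIdeal {a : σ → R} {s : Set σ} (i : σ) {r : R}
    (hr : r ∈ Ideal.span (a '' s)) :
    X i * C r ∈ Ideal.span (X '' s) ⊔ koszulIdeal a := by
  suffices h : Ideal.span (a '' s) ≤
      ((Ideal.span (X '' s) ⊔ koszulIdeal a).colon {X i}).comap C by
    simpa [Submodule.mem_colon_singleton, mul_comm] using h hr
  refine Ideal.span_le.2 ?_
  rintro _ ⟨j, hj, rfl⟩
  have hX : C (a i) * X j ∈ Ideal.span (X '' s) :=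
    Ideal.mul_mem_left _ _ (Ideal.subset_span (Set.mem_image_of_mem X hj))
  have hK : C (a j) * X i - C (a i) * X j ∈ koszulIdeal a := Ideal.subset_span ⟨(j, i), rfl⟩
  simpa [Submodule.mem_colon_singleton] using
    add_mem (Ideal.mem_sup_right hK) (Ideal.mem_sup_left hX)

theorem exists_isHomogeneous_sub_X_mul_mem {a : σ → R} {s : Set σ} {i : σ} {d : ℕ}
    {F : MvPolynomial σ R} (hF : F.IsHomogeneous (d + 1))
    (hmem : F ∈ Ideal.span (X '' insert i s) ⊔ koszulIdeal a) :
    ∃ G : MvPolynomial σ R, G.IsHomogeneous d ∧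
      F - X i * G ∈ Ideal.span (X '' s) ⊔ koszulIdeal a := by
  rw [Set.image_insert_eq, Ideal.span_insert, sup_assoc, Ideal.mem_span_singleton_sup] at hmem
  obtain ⟨G, E, hE, rfl⟩ := hmem
  refine ⟨homogeneousComponent d G, homogeneousComponent_isHomogeneous d G, ?_⟩
  have hcomp :=
    homogeneousComponent_mem_of_mem (isHomogeneous_span_X_sup_koszulIdeal a s) hE (d + 1)
  rw [← homogeneousComponent_eq_self hF, map_add,
    homogeneousComponent_add_mul_of_isHomogeneous (isHomogeneous_X R i)]
  convert hcomp using 1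
  ring

variable {n : ℕ} {a : Fin n → R}

-- Downward induction on `m`. Write `F = yₘ G + E` with `E` in the ideal; then `aₘ G(a)` lies in
-- `(aⱼ : j < m)`, hence so does `G(a)` by regularity, and `G` has smaller degree than `F`.
theorem mem_span_X_sup_koszulIdeal
    (ha : ∀ i x, a i * x ∈ Ideal.span (a '' Set.Iio i) → x ∈ Ideal.span (a '' Set.Iio i))
    {m : ℕ} (hm : m ≤ n) {d : ℕ} {F : MvPolynomial (Fin n) R} (hF : F.IsHomogeneous (d + 1))
    (h : aeval a F ∈ Ideal.span (a '' {i | i.val < m})) :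
    F ∈ Ideal.span (X '' {i : Fin n | i.val < m}) ⊔ koszulIdeal a := by
  induction hm using Nat.decreasingInduction generalizing d F with
  | self =>
    refine Ideal.mem_sup_left (mem_ideal_span_X_image.2 fun s hs => ?_)
    by_contra! hs0
    have : s = 0 := Finsupp.ext fun i => hs0 i i.isLt
    simpa [this] using hF.degree_eq_sum_deg_support hs
  | of_succ m hm ih =>
    let i : Fin n := ⟨m, hm⟩
    have hIio : {j : Fin n | j.val < m} = Set.Iio i := rfl
    have hinsert : {j : Fin n | j.val < m + 1} = insert i (Set.Iio i) := by
      rw [Set.Iio_insert]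
      exact Set.ext fun j => Nat.lt_succ_iff
    rw [hIio] at h ⊢
    rw [hinsert] at ih
    have hsplit {d F} (hF : F.IsHomogeneous (d + 1)) (h : aeval a F ∈ Ideal.span (a '' Set.Iio i)) :
        ∃ G : MvPolynomial (Fin n) R, G.IsHomogeneous d ∧
          aeval a G ∈ Ideal.span (a '' Set.Iio i) ∧
          F - X i * G ∈ Ideal.span (X '' Set.Iio i) ⊔ koszulIdeal a := by
      obtain ⟨G, hG, hFG⟩ := exists_isHomogeneous_sub_X_mul_mem hF
        (ih hF (Ideal.span_mono (Set.image_mono (Set.subset_insert _ _)) h))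
      have hiG := sub_mem h (aeval_mem_span_of_mem_span_X_sup_koszulIdeal hFG)
      exact ⟨G, hG, ha i _ (by simpa using hiG), hFG⟩
    induction d generalizing F with
    | zero =>
      obtain ⟨G, hG, hGa, hFG⟩ := hsplit hF h
      rw [totalDegree_eq_zero_iff_eq_C.1 ((totalDegree_zero_iff_isHomogeneous _).2 hG)] at hGa hFG
      exact (Submodule.sub_mem_iff_left _
        (X_mul_C_mem_span_X_sup_koszulIdeal i (by simpa using hGa))).1 hFG
    | succ d ihd =>
      obtain ⟨G, hG, hGa, hFG⟩ := hsplit hF h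
      exact (Submodule.sub_mem_iff_left _ (Ideal.mul_mem_left _ _ (ihd hG hGa))).1 hFG

theorem mul_mem_span_image_Iio_imp_of_isWeaklyRegular
    (ha : RingTheory.Sequence.IsWeaklyRegular R (List.ofFn a)) (i : Fin n) (x : R)
    (hx : a i * x ∈ Ideal.span (a '' Set.Iio i)) : x ∈ Ideal.span (a '' Set.Iio i) := by
  have hspan : Ideal.ofList ((List.ofFn a).take i) = Ideal.span (a '' Set.Iio i) := by
    refine congrArg Ideal.span (Set.ext fun y => ?_)
    simp only [Set.mem_ofPred_eq, List.mem_take_iff_getElem, List.length_ofFn, lt_inf_iff,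
      List.getElem_ofFn, Set.mem_image, Set.mem_Iio]
    exact ⟨fun ⟨j, hj, hjy⟩ => ⟨⟨j, hj.2⟩, hj.1, hjy⟩, fun ⟨j, hj, hjy⟩ => ⟨j, ⟨hj, j.isLt⟩, hjy⟩⟩
  have hi := (RingTheory.Sequence.isWeaklyRegular_iff_Fin _ _).1 ha ⟨i, by simp⟩
  rw [isSMulRegular_quotient_iff_mem_of_smul_mem] at hi
  simp only [smul_eq_mul, Ideal.mul_top, hspan, Fin.getElem_fin, List.getElem_ofFn] at hi
  exact hi x hx

theorem eq_zero_of_isHomogeneous_zero_of_aeval_eq_zero {σ : Type*} {a : σ → R}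
    {F : MvPolynomial σ R} (hF : F.IsHomogeneous 0) (h : aeval a F = 0) : F = 0 := by
  have hC := totalDegree_eq_zero_iff_eq_C.1 ((totalDegree_zero_iff_isHomogeneous _).2 hF)
  rw [hC, aeval_C, Algebra.algebraMap_self_apply] at h
  rw [hC, h, C_0]

theorem mem_koszulIdeal_of_aeval_eq_zero
    (ha : RingTheory.Sequence.IsWeaklyRegular R (List.ofFn a)) {d : ℕ}
    {F : MvPolynomial (Fin n) R} (hF : F.IsHomogeneous d) (h : aeval a F = 0) :
    F ∈ koszulIdeal a := by
  cases d with
  | zero => exact eq_zero_of_isHomogeneous_zero_of_aeval_eq_zero hF h ▸ zero_mem _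
  | succ d =>
    simpa using mem_span_X_sup_koszulIdeal (mul_mem_span_image_Iio_imp_of_isWeaklyRegular ha)
      (Nat.zero_le n) hF (by simp [h])

theorem exists_isHomogeneous_sum_of_mem_koszulIdeal {σ : Type*} [Fintype σ] {a : σ → R}
    {d : ℕ} {F : MvPolynomial σ R} (hF : F.IsHomogeneous (d + 1)) (h : F ∈ koszulIdeal a) :
    ∃ c : σ × σ → MvPolynomial σ R, (∀ p, (c p).IsHomogeneous d) ∧
      ∑ p, c p * (C (a p.1) * X p.2 - C (a p.2) * X p.1) = F := by
  obtain ⟨c, rfl⟩ := Ideal.mem_span_range_iff_exists_fun.1 h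
  refine ⟨fun p => homogeneousComponent d (c p),
    fun p => homogeneousComponent_isHomogeneous d (c p), ?_⟩
  conv_rhs => rw [← homogeneousComponent_eq_self hF, map_sum]
  exact Finset.sum_congr rfl fun p _ =>
    (homogeneousComponent_add_mul_of_isHomogeneous (isHomogeneous_koszul a p.1 p.2) _).symm

end KoszulIdeal

section HomogeneousInduction

open MvPolynomial

variable {σ R : Type*} [CommRing R]

@[elab_as_elim]
theorem isHomogeneous_induction {motive : ℕ → MvPolynomial σ R → Prop}
    (zero : ∀ d, motive d 0) (C : ∀ r, motive 0 (C r))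
    (add : ∀ d F G, motive d F → motive d G → motive d (F + G))
    (mul_X : ∀ d F i, F.IsHomogeneous d → motive d F → motive (d + 1) (F * X i))
    {d : ℕ} {F : MvPolynomial σ R} (hF : F.IsHomogeneous d) : motive d F := by
  suffices h : ∀ r, motive d (MvPolynomial.C r * F) by simpa using h 1
  rw [← mem_homogeneousSubmodule, ← homogeneousSubmodule_one_pow] at hF
  induction hF using Submodule.pow_induction_on_right' with
  | algebraMap s => exact fun r => by simpa using C (r * s)
  | add F G d _ _ hF hG => exact fun r => by simpa only [mul_add] using add d _ _ (hF r) (hG r)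
  | mul_mem d F hF' hF G hG =>
    rw [homogeneousSubmodule_one_pow, mem_homogeneousSubmodule] at hF'
    rw [homogeneousSubmodule_one_eq_span_X] at hG
    induction hG using Submodule.span_induction with
    | zero => simpa using zero _
    | mem G hG =>
      obtain ⟨i, rfl⟩ := hG
      exact fun r => by simpa only [mul_assoc] using mul_X d _ i (hF'.C_mul r) (hF r)
    | add G H _ _ hG hH => exact fun r => by simpa only [mul_add] using add _ _ _ (hG r) (hH r)
    | smul s G _ hG =>
      exact fun r => by simpa [smul_eq_C_mul, mul_left_comm, mul_assoc] using hG (r * s)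

end HomogeneousInduction

section DifferentialOperators

open MvPolynomial

variable {k R A σ : Type*} [CommRing k] [CommRing R] [Algebra k R] [Ring A] [Algebra k A]
  (ι : R →ₐ[k] A) (Λ : MvPolynomial σ k →ₐ[k] A)

/-- The operator `∑ r_α L^α` with total symbol `∑ r_α y^α`, coefficients written on the left. Here
`Λ` is evaluation of polynomials at the commuting operators `L`. -/
noncomputable def ofSymbol : MvPolynomial σ R →+ A :=
  AddMonoidAlgebra.liftNC (ι : R →+ A) fun s => Λ (monomial s.toAdd 1)

/-- The operators of order `< d`, that is, the sums of products `r L_{i₁} ⋯ L_{iₘ}` with `m < d`.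
The strict inequality makes the filtration start at `0`. -/
noncomputable def orderLT : ℕ → Submodule k A
  | 0 => ⊥
  | d + 1 => LinearMap.range ι.toLinearMap ⊔
      ⨆ i, (orderLT d).map (LinearMap.mulRight k (Λ (X i)))

/-- The first order operator `a i L_j - a j L_i`, whose symbol is a Koszul relation. -/
noncomputable def koszulOp (a : σ → R) (i j : σ) : A :=
  ι (a i) * Λ (X j) - ι (a j) * Λ (X i)

@[simp]
theorem ofSymbol_monomial (s : σ →₀ ℕ) (r : R) :
    ofSymbol ι Λ (monomial s r) = ι r * Λ (monomial s 1) :=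
  AddMonoidAlgebra.liftNC_single ..

@[simp]
theorem ofSymbol_C (r : R) : ofSymbol ι Λ (C r) = ι r := by
  rw [C_apply, ofSymbol_monomial, ← C_apply, C_1, map_one, mul_one]

theorem ofSymbol_C_mul (r : R) (F : MvPolynomial σ R) :
    ofSymbol ι Λ (C r * F) = ι r * ofSymbol ι Λ F := by
  induction F using MvPolynomial.induction_on' with
  | monomial s a => simp [C_mul_monomial, mul_assoc]
  | add F G hF hG => simp [mul_add, hF, hG]

theorem ofSymbol_mul_X (F : MvPolynomial σ R) (i : σ) :
    ofSymbol ι Λ (F * X i) = ofSymbol ι Λ F * Λ (X i) := by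
  induction F using MvPolynomial.induction_on' with
  | monomial s a =>
    have hX : (monomial s a * X i : MvPolynomial σ R) = monomial (s + Finsupp.single i 1) a := by
      rw [monomial_add_single, pow_one]
    rw [hX, ofSymbol_monomial, ofSymbol_monomial, monomial_add_single, pow_one, map_mul, mul_assoc]
  | add F G hF hG => simp [add_mul, hF, hG]

variable {ι Λ}

theorem map_mem_orderLT_succ (r : R) (d : ℕ) : ι r ∈ orderLT ι Λ (d + 1) :=
  Submodule.mem_sup_left ⟨r, rfl⟩

theorem mul_map_X_mem_orderLT_succ {d : ℕ} {P : A} (hP : P ∈ orderLT ι Λ d) (i : σ) :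
    P * Λ (X i) ∈ orderLT ι Λ (d + 1) :=
  Submodule.mem_sup_right (Submodule.mem_iSup_of_mem i ⟨P, hP, rfl⟩)

@[elab_as_elim]
theorem orderLT_succ_induction {d : ℕ} {motive : A → Prop} (map : ∀ r, motive (ι r))
    (mul_map_X : ∀ P ∈ orderLT ι Λ d, ∀ i, motive (P * Λ (X i)))
    (add : ∀ P Q, motive P → motive Q → motive (P + Q))
    {P : A} (hP : P ∈ orderLT ι Λ (d + 1)) : motive P := by
  obtain ⟨_, ⟨r, rfl⟩, Q, hQ, rfl⟩ := Submodule.mem_sup.1 hP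
  refine add _ _ (map r) ?_
  clear hP
  induction hQ using Submodule.iSup_induction' with
  | mem i _ hQ =>
    obtain ⟨P, hP, rfl⟩ := hQ
    exact mul_map_X P hP i
  | zero => simpa using map 0
  | add Q Q' _ _ hQ hQ' => exact add Q Q' hQ hQ'

theorem monotone_orderLT : Monotone (orderLT ι Λ) := by
  refine monotone_nat_of_le_succ fun d => ?_
  induction d with
  | zero => exact bot_le
  | succ d ih => exact sup_le_sup_left (iSup_mono fun i => Submodule.map_mono ih) _

theorem ofSymbol_mem_orderLT_succ {d : ℕ} {F : MvPolynomial σ R} (hF : F.IsHomogeneous d) :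
    ofSymbol ι Λ F ∈ orderLT ι Λ (d + 1) := by
  refine isHomogeneous_induction (fun d => ?_) (fun r => ?_) (fun d F G hF hG => ?_)
    (fun d F i _ hF => ?_) hF
  · exact map_zero (ofSymbol ι Λ) ▸ zero_mem _
  · exact ofSymbol_C ι Λ r ▸ map_mem_orderLT_succ r 0
  · exact map_add (ofSymbol ι Λ) F G ▸ add_mem hF hG
  · exact ofSymbol_mul_X ι Λ F i ▸ mul_map_X_mem_orderLT_succ hF i

theorem exists_isHomogeneous_sub_ofSymbol_mem_orderLT {d : ℕ} {P : A}
    (hP : P ∈ orderLT ι Λ (d + 1)) :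
    ∃ F : MvPolynomial σ R, F.IsHomogeneous d ∧ P - ofSymbol ι Λ F ∈ orderLT ι Λ d := by
  induction d using Nat.strong_induction_on generalizing P with | _ d ih =>
  refine orderLT_succ_induction (fun r => ?_) (fun P hP i => ?_) (fun P Q hP hQ => ?_) hP
  · cases d with
    | zero => exact ⟨C r, isHomogeneous_C σ r, by simp⟩
    | succ d => exact ⟨0, isHomogeneous_zero σ R _, by simpa using map_mem_orderLT_succ r d⟩
  · cases d with
    | zero => exact ⟨0, isHomogeneous_zero σ R _, by simp [(Submodule.mem_bot k).1 hP]⟩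
    | succ d =>
      obtain ⟨F, hF, hPF⟩ := ih d d.lt_succ_self hP
      refine ⟨F * X i, hF.mul (isHomogeneous_X R i), ?_⟩
      rw [ofSymbol_mul_X, ← sub_mul]
      exact mul_map_X_mem_orderLT_succ hPF i
  · obtain ⟨⟨F, hF, hPF⟩, G, hG, hQG⟩ := hP, hQ
    refine ⟨F + G, hF.add hG, ?_⟩
    rw [map_add, add_sub_add_comm]
    exact add_mem hPF hQG

theorem span_range_koszulOp_eq_span_lt [LinearOrder σ] (a : σ → R) :
    Ideal.span (Set.range fun p : σ × σ => koszulOp ι Λ a p.1 p.2) =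
      Ideal.span {P | ∃ i j, i < j ∧ P = koszulOp ι Λ a i j} := by
  refine le_antisymm (Ideal.span_le.2 ?_) (Ideal.span_mono ?_)
  · rintro _ ⟨⟨i, j⟩, rfl⟩
    obtain hij | rfl | hij := lt_trichotomy i j
    · exact Ideal.subset_span ⟨i, j, hij, rfl⟩
    · simp [koszulOp]
    · rw [SetLike.mem_coe, ← neg_mem_iff]
      exact Ideal.subset_span ⟨j, i, hij, neg_sub _ _⟩
  · rintro _ ⟨i, j, -, rfl⟩
    exact ⟨(i, j), rfl⟩

theorem map_mul_mem_orderLT {d : ℕ} {P : A} (hP : P ∈ orderLT ι Λ d) (r : R) :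
    ι r * P ∈ orderLT ι Λ d := by
  induction d generalizing P with
  | zero => simp [(Submodule.mem_bot k).1 hP, orderLT]
  | succ d ih =>
    refine orderLT_succ_induction (fun s => ?_) (fun P hP i => ?_) (fun P Q hP hQ => ?_) hP
    · exact map_mul ι r s ▸ map_mem_orderLT_succ _ _
    · exact mul_assoc (ι r) P _ ▸ mul_map_X_mem_orderLT_succ (ih hP) i
    · exact mul_add (ι r) P Q ▸ add_mem hP hQ

variable {δ : σ → R → R}
  (hδ : ∀ i r, Λ (X i) * ι r = ι r * Λ (X i) + ι (δ i r))

include hδ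

theorem map_X_mul_mem_orderLT_succ {d : ℕ} {P : A} (hP : P ∈ orderLT ι Λ d) (i : σ) :
    Λ (X i) * P ∈ orderLT ι Λ (d + 1) := by
  induction d generalizing P with
  | zero => simp [(Submodule.mem_bot k).1 hP]
  | succ d ih =>
    refine orderLT_succ_induction (fun s => ?_) (fun P hP j => ?_) (fun P Q hP hQ => ?_) hP
    · exact hδ i s ▸ add_mem (mul_map_X_mem_orderLT_succ (map_mem_orderLT_succ s d) i)
        (map_mem_orderLT_succ _ _)
    · exact mul_assoc (Λ (X i)) P _ ▸ mul_map_X_mem_orderLT_succ (ih hP) j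
    · exact mul_add (Λ (X i)) P Q ▸ add_mem hP hQ

theorem mul_map_sub_map_mul_mem_orderLT {d : ℕ} {P : A} (hP : P ∈ orderLT ι Λ (d + 1)) (r : R) :
    P * ι r - ι r * P ∈ orderLT ι Λ d := by
  induction d generalizing P r with
  | zero =>
    refine orderLT_succ_induction (fun s => ?_) (fun P hP j => ?_) (fun P Q hP hQ => ?_) hP
    · simp [← map_mul, mul_comm]
    · simp [(Submodule.mem_bot k).1 hP]
    · convert add_mem hP hQ using 1
      noncomm_ring
  | succ d ih =>
    refine orderLT_succ_induction (fun s => ?_) (fun P hP i => ?_) (fun P Q hP hQ => ?_) hP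
    · simp [← map_mul, mul_comm]
    · have h : P * Λ (X i) * ι r - ι r * (P * Λ (X i)) =
          (P * ι r - ι r * P) * Λ (X i) + ((P * ι (δ i r) - ι (δ i r) * P) + ι (δ i r) * P) := by
        rw [mul_assoc, hδ]
        noncomm_ring
      rw [h]
      exact add_mem (mul_map_X_mem_orderLT_succ (ih hP r) i)
        (add_mem (monotone_orderLT d.le_succ (ih hP _)) (map_mul_mem_orderLT hP _))
    · convert add_mem hP hQ using 1
      noncomm_ring

theorem mul_mem_orderLT_add {d e : ℕ} {P Q : A}
    (hP : P ∈ orderLT ι Λ d) (hQ : Q ∈ orderLT ι Λ e) : P * Q ∈ orderLT ι Λ (d + e) := by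
  induction d generalizing P Q e with
  | zero => simp [(Submodule.mem_bot k).1 hP]
  | succ d ih =>
    refine orderLT_succ_induction (fun s => ?_) (fun P hP i => ?_) (fun P P' hP hP' => ?_) hP
    · exact monotone_orderLT (Nat.le_add_left _ _) (map_mul_mem_orderLT hQ s)
    · rw [mul_assoc, Nat.add_right_comm, Nat.add_assoc]
      exact ih hP (map_X_mul_mem_orderLT_succ hδ hQ i)
    · exact add_mul P P' Q ▸ add_mem hP hP'

theorem exists_mem_orderLT
    (hA : Algebra.adjoin k (Set.range ι ∪ Set.range fun i => Λ (X i)) = ⊤) (P : A) :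
    ∃ d, P ∈ orderLT ι Λ d := by
  have hP : P ∈ Algebra.adjoin k (Set.range ι ∪ Set.range fun i => Λ (X i)) := hA ▸ trivial
  induction hP using Algebra.adjoin_induction with
  | mem P hP =>
    obtain ⟨r, rfl⟩ | ⟨i, rfl⟩ := hP
    · exact ⟨1, map_mem_orderLT_succ r 0⟩
    · exact ⟨2, by simpa using mul_map_X_mem_orderLT_succ (map_mem_orderLT_succ (ι := ι) 1 0) i⟩
  | algebraMap c => exact ⟨1, ι.commutes c ▸ map_mem_orderLT_succ _ 0⟩
  | add P Q _ _ hP hQ =>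
    obtain ⟨⟨d, hP⟩, e, hQ⟩ := hP, hQ
    exact ⟨max d e, add_mem (monotone_orderLT (le_max_left _ _) hP)
      (monotone_orderLT (le_max_right _ _) hQ)⟩
  | mul P Q _ _ hP hQ =>
    obtain ⟨⟨d, hP⟩, e, hQ⟩ := hP, hQ
    exact ⟨d + e, mul_mem_orderLT_add hδ hP hQ⟩

theorem ofSymbol_mul_koszulOp_sub_mem_orderLT {d : ℕ} {c : MvPolynomial σ R}
    (hc : c.IsHomogeneous d) (a : σ → R) (i j : σ) :
    ofSymbol ι Λ c * koszulOp ι Λ a i j - ofSymbol ι Λ (c * (C (a i) * X j - C (a j) * X i)) ∈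
      orderLT ι Λ (d + 1) := by
  have hcomm (r : R) (l : σ) : ofSymbol ι Λ c * (ι r * Λ (X l)) - ofSymbol ι Λ (c * (C r * X l)) ∈
      orderLT ι Λ (d + 1) := by
    rw [← mul_assoc, ← mul_assoc, mul_comm c, ofSymbol_mul_X, ofSymbol_C_mul, ← sub_mul]
    exact mul_map_X_mem_orderLT_succ
      (mul_map_sub_map_mul_mem_orderLT hδ (ofSymbol_mem_orderLT_succ hc) r) l
  rw [koszulOp, mul_sub, mul_sub, map_sub, sub_sub_sub_comm]
  exact sub_mem (hcomm (a i) j) (hcomm (a j) i)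

theorem exists_mem_span_koszulOp_ofSymbol_sub_mem_orderLT [Finite σ] {a : σ → R} {d : ℕ}
    {F : MvPolynomial σ R} (hF : F.IsHomogeneous (d + 1)) (h : F ∈ koszulIdeal a) :
    ∃ Q ∈ Ideal.span (Set.range fun p : σ × σ => koszulOp ι Λ a p.1 p.2),
      ofSymbol ι Λ F - Q ∈ orderLT ι Λ (d + 1) := by
  cases nonempty_fintype σ
  obtain ⟨c, hc, rfl⟩ := exists_isHomogeneous_sum_of_mem_koszulIdeal hF h
  refine ⟨∑ p, ofSymbol ι Λ (c p) * koszulOp ι Λ a p.1 p.2, sum_mem fun p _ =>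
    Ideal.mul_mem_left _ _ (Ideal.subset_span ⟨p, rfl⟩), ?_⟩
  rw [map_sum, ← Finset.sum_sub_distrib]
  refine sum_mem fun p _ => ?_
  rw [← neg_mem_iff, neg_sub]
  exact ofSymbol_mul_koszulOp_sub_mem_orderLT hδ (hc p) a p.1 p.2

end DifferentialOperators

section Torsion

open MvPolynomial

variable {k R A N : Type*} [CommRing k] [CommRing R] [Algebra k R] [Ring A] [Algebra k A]
  [AddCommGroup N] [Module A N] {n : ℕ} {ι : R →ₐ[k] A} {Λ : MvPolynomial (Fin n) k →ₐ[k] A}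
  {δ : Fin n → R → R} {a : Fin n → R} {e : N}

theorem mem_span_koszulOp_of_smul_eq_zero
    (hδ : ∀ i r, Λ (X i) * ι r = ι r * Λ (X i) + ι (δ i r))
    (ha : RingTheory.Sequence.IsWeaklyRegular R (List.ofFn a))
    (hK : Ideal.span (Set.range fun p : Fin n × Fin n => koszulOp ι Λ a p.1 p.2) ≤
      Ideal.torsionOf A N e)
    (hsymb : ∀ (d : ℕ) (F : MvPolynomial (Fin n) R), F.IsHomogeneous d →
      ∀ P : A, P - ofSymbol ι Λ F ∈ orderLT ι Λ d → P • e = 0 → aeval a F = 0)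
    {d : ℕ} {P : A} (hP : P ∈ orderLT ι Λ d) (he : P • e = 0) :
    P ∈ Ideal.span (Set.range fun p : Fin n × Fin n => koszulOp ι Λ a p.1 p.2) := by
  induction d generalizing P with
  | zero => exact (Submodule.mem_bot k).1 hP ▸ zero_mem _
  | succ d ih =>
    obtain ⟨F, hF, hPF⟩ := exists_isHomogeneous_sub_ofSymbol_mem_orderLT hP
    have hFa : aeval a F = 0 := hsymb d F hF P hPF he
    cases d with
    | zero =>
      rw [eq_zero_of_isHomogeneous_zero_of_aeval_eq_zero hF hFa, map_zero, sub_zero] at hPF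
      exact ih hPF he
    | succ d =>
      obtain ⟨Q, hQ, hFQ⟩ := exists_mem_span_koszulOp_ofSymbol_sub_mem_orderLT hδ hF
        (mem_koszulIdeal_of_aeval_eq_zero ha hF hFa)
      have hQe : Q • e = 0 := hK hQ
      have hPQ : P - Q ∈ orderLT ι Λ (d + 1) := sub_add_sub_cancel P _ Q ▸ add_mem hPF hFQ
      exact (Submodule.sub_mem_iff_left _ hQ).1 (ih hPQ (by rw [sub_smul, he, hQe, sub_zero]))

theorem torsionOf_eq_span_koszulOp
    (hδ : ∀ i r, Λ (X i) * ι r = ι r * Λ (X i) + ι (δ i r))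
    (ha : RingTheory.Sequence.IsWeaklyRegular R (List.ofFn a))
    (hA : Algebra.adjoin k (Set.range ι ∪ Set.range fun i => Λ (X i)) = ⊤)
    (hK : ∀ i j, koszulOp ι Λ a i j • e = 0)
    (hsymb : ∀ (d : ℕ) (F : MvPolynomial (Fin n) R), F.IsHomogeneous d →
      ∀ P : A, P - ofSymbol ι Λ F ∈ orderLT ι Λ d → P • e = 0 → aeval a F = 0) :
    Ideal.torsionOf A N e =
      Ideal.span (Set.range fun p : Fin n × Fin n => koszulOp ι Λ a p.1 p.2) := by
  have hle : Ideal.span (Set.range fun p : Fin n × Fin n => koszulOp ι Λ a p.1 p.2) ≤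
      Ideal.torsionOf A N e :=
    Ideal.span_le.2 (Set.range_subset_iff.2 fun p => hK p.1 p.2)
  refine le_antisymm (fun P hP => ?_) hle
  obtain ⟨d, hd⟩ := exists_mem_orderLT hδ hA P
  exact mem_span_koszulOp_of_smul_eq_zero hδ ha hle hsymb hd hP

end Torsion

section TwistedDerivation

open Polynomial

variable {k S : Type*} [CommRing k] [CommRing S] [Algebra k S]

/-- The derivation of `S[X]` that applies `D` to each coefficient. -/
noncomputable def coeffwise (D : Derivation k S S) : Derivation k S[X] S[X] :=
  PolynomialModule.equivPolynomialSelf.toLinearMap.compDer D.mapCoeffs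

/-- The operator `u ↦ D u + g X u`: when `g = f⁻¹ D f`, this is the action of `D` on
`∑ u_j s^j f^s`, where `X` plays the role of `s`. -/
noncomputable def twistedDeriv (D : Derivation k S S) (g : S) : Module.End k S[X] :=
  (coeffwise D : S[X] →ₗ[k] S[X]) + LinearMap.mulLeft k (X * C g)

variable (D : Derivation k S S) (g : S)

@[simp]
theorem coeff_coeffwise (p : S[X]) (m : ℕ) : (coeffwise D p).coeff m = D (p.coeff m) := rfl

@[simp]
theorem coeffwise_C (s : S) : coeffwise D (C s) = C (D s) := by
  ext m
  rw [coeff_coeffwise, coeff_C, coeff_C]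
  split_ifs <;> simp

@[simp]
theorem coeffwise_X : coeffwise D X = 0 := by
  ext m
  rw [coeff_coeffwise, coeff_X]
  split_ifs <;> simp

theorem twistedDeriv_apply (p : S[X]) : twistedDeriv D g p = coeffwise D p + X * C g * p := rfl

theorem coeff_twistedDeriv_succ (p : S[X]) (m : ℕ) :
    (twistedDeriv D g p).coeff (m + 1) = D (p.coeff (m + 1)) + g * p.coeff m := by
  rw [twistedDeriv_apply, coeff_add, mul_assoc, coeff_X_mul, coeff_C_mul, coeff_coeffwise]

theorem natDegree_twistedDeriv_le {p : S[X]} {m : ℕ} (hp : p.natDegree ≤ m) :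
    (twistedDeriv D g p).natDegree ≤ m + 1 := by
  refine natDegree_le_iff_coeff_eq_zero.2 fun N hN => ?_
  obtain ⟨N, rfl⟩ := Nat.exists_eq_succ_of_ne_zero (Nat.ne_zero_of_lt hN)
  rw [Nat.succ_eq_add_one, coeff_twistedDeriv_succ, coeff_eq_zero_of_natDegree_lt (by lia),
    coeff_eq_zero_of_natDegree_lt (by lia), map_zero, mul_zero, add_zero]

theorem twistedDeriv_C_mul (s : S) (p : S[X]) :
    twistedDeriv D g (C s * p) = C s * twistedDeriv D g p + C (D s) * p := by
  simp only [twistedDeriv_apply, Derivation.leibniz, coeffwise_C, smul_eq_mul]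
  ring

theorem eq_twistedDeriv_of_forall_C_mul_X_pow {D : Derivation k S S} {g : S}
    {L : Module.End k S[X]} (hL : ∀ s m, L (C s * X ^ m) =
      C (D s) * X ^ m + X * C g * (C s * X ^ m)) :
    L = twistedDeriv D g := by
  refine LinearMap.ext fun p => ?_
  induction p using Polynomial.induction_on' with
  | add p q hp hq => rw [map_add, map_add, hp, hq]
  | monomial m s =>
    rw [← C_mul_X_pow_eq_monomial, hL, twistedDeriv_apply, Derivation.leibniz,
      Derivation.leibniz_pow, coeffwise_C, coeffwise_X, smul_zero, smul_zero, smul_zero, zero_add,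
      smul_eq_mul, mul_comm (X ^ m)]

variable {D g}

theorem commute_twistedDeriv {D' : Derivation k S S} {g' : S} (hD : ⁅D, D'⁆ = 0)
    (hg : D g' = D' g) : Commute (twistedDeriv D g) (twistedDeriv D' g') := by
  have hcomm (p : S[X]) : coeffwise D (coeffwise D' p) = coeffwise D' (coeffwise D p) := by
    ext m
    simpa [Derivation.commutator_apply, sub_eq_zero] using congr($hD (p.coeff m))
  refine LinearMap.ext fun p => ?_
  simp only [Module.End.mul_apply, twistedDeriv_apply, map_add, Derivation.leibniz, smul_eq_mul,
    coeffwise_C, coeffwise_X, hcomm, hg]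
  ring

end TwistedDerivation

section LeadingCoefficient

open Polynomial

variable {k R S A σ : Type*} [CommRing k] [CommRing R] [Algebra k R] [CommRing S] [Algebra k S]
  [Algebra R S] [Ring A] [Algebra k A] [Module A S[X]]
  {ι : R →ₐ[k] A} {Λ : MvPolynomial σ k →ₐ[k] A} {D : σ → Derivation k S S} {g : σ → S}
  (hι : ∀ r (p : S[X]), ι r • p = C (algebraMap R S r) * p)
  (hΛ : ∀ i (p : S[X]), Λ (MvPolynomial.X i) • p = twistedDeriv (D i) (g i) p)

include hι hΛ

theorem coeff_smul_eq_zero_of_mem_orderLT {d e : ℕ} {P : A} (hP : P ∈ orderLT ι Λ d) {p : S[X]}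
    (hp : p.natDegree ≤ e) : (P • p).coeff (d + e) = 0 := by
  induction d generalizing P p e with
  | zero => simp [(Submodule.mem_bot k).1 hP]
  | succ d ih =>
    refine orderLT_succ_induction (fun r => ?_) (fun Q hQ i => ?_) (fun Q Q' hQ hQ' => ?_) hP
    · rw [hι, coeff_C_mul, coeff_eq_zero_of_natDegree_lt (by lia), mul_zero]
    · rw [mul_smul, hΛ, Nat.add_right_comm, Nat.add_assoc]
      exact ih hQ (natDegree_twistedDeriv_le _ _ hp)
    · rw [add_smul, coeff_add, hQ, hQ', add_zero]

theorem coeff_ofSymbol_smul {d e : ℕ} {F : MvPolynomial σ R} (hF : F.IsHomogeneous d) {p : S[X]}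
    (hp : p.natDegree ≤ e) :
    (ofSymbol ι Λ F • p).coeff (d + e) = MvPolynomial.aeval g F * p.coeff e := by
  suffices h : ∀ e (p : S[X]), p.natDegree ≤ e →
    (ofSymbol ι Λ F • p).coeff (d + e) = MvPolynomial.aeval g F * p.coeff e from h e p hp
  clear hp p e
  refine isHomogeneous_induction (fun d => ?_) (fun r => ?_) (fun d F G hF hG => ?_)
    (fun d F i _ hF => ?_) hF
  · simp
  · simp [hι]
  · intro e p hp
    rw [map_add, map_add, add_smul, coeff_add, hF e p hp, hG e p hp, add_mul]
  · intro e p hp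
    rw [ofSymbol_mul_X, mul_smul, hΛ, Nat.add_right_comm, Nat.add_assoc,
      hF _ _ (natDegree_twistedDeriv_le _ _ hp), coeff_twistedDeriv_succ,
      coeff_eq_zero_of_natDegree_lt (Nat.lt_succ_of_le hp), map_zero, zero_add, map_mul,
      MvPolynomial.aeval_X, mul_assoc]

theorem coeff_smul_one_of_sub_ofSymbol_mem_orderLT {d : ℕ} {F : MvPolynomial σ R}
    (hF : F.IsHomogeneous d) {P : A} (hP : P - ofSymbol ι Λ F ∈ orderLT ι Λ d) :
    (P • (1 : S[X])).coeff d = MvPolynomial.aeval g F := by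
  have hlow := coeff_smul_eq_zero_of_mem_orderLT hι hΛ hP natDegree_one.le
  have hlead := coeff_ofSymbol_smul hι hΛ hF (natDegree_one (R := S)).le
  rw [sub_smul, coeff_sub, hlead, sub_eq_zero] at hlow
  simpa using hlow

end LeadingCoefficient

theorem aeval_mul_algebraMap_of_isHomogeneous {R S σ : Type*} [CommRing R] [CommRing S]
    [Algebra R S] (u : S) (a : σ → R) {d : ℕ} {F : MvPolynomial σ R} (hF : F.IsHomogeneous d) :
    MvPolynomial.aeval (fun i => u * algebraMap R S (a i)) F =
      u ^ d * algebraMap R S (MvPolynomial.aeval a F) := by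
  refine isHomogeneous_induction (fun d => ?_) (fun r => ?_) (fun d F G hF hG => ?_)
    (fun d F i _ hF => ?_) hF
  · simp
  · simp
  · simp [hF, hG, mul_add]
  · simp only [map_mul, MvPolynomial.aeval_X, hF]
    ring

open scoped IsMulCommutative in
theorem exists_aeval_of_commute {k A σ : Type*} [CommRing k] [Ring A] [Algebra k A] {L : σ → A}
    (hL : ∀ i j, Commute (L i) (L j)) :
    ∃ Λ : MvPolynomial σ k →ₐ[k] A, ∀ i, Λ (MvPolynomial.X i) = L i := by
  have : IsMulCommutative (Algebra.adjoin k (Set.range L)) := Algebra.isMulCommutative_adjoin k (by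
    rintro _ ⟨i, rfl⟩ _ ⟨j, rfl⟩
    exact hL i j)
  let x (i : σ) : Algebra.adjoin k (Set.range L) := ⟨L i, Algebra.subset_adjoin ⟨i, rfl⟩⟩
  exact ⟨(Algebra.adjoin k (Set.range L)).val.comp (MvPolynomial.aeval x), fun i => by simp [x]⟩

theorem exists_algHom_of_eq_adjoin {k R A σ : Type*} [CommRing k] [CommRing R] [Algebra k R]
    [Ring A] [Algebra k A] (ι₀ : R →ₐ[k] A) {L : σ → A} (hL : ∀ i j, Commute (L i) (L j))
    {B : Subalgebra k A} (hB : B = Algebra.adjoin k (Set.range ι₀ ∪ Set.range L)) :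
    ∃ (ι : R →ₐ[k] B) (Λ : MvPolynomial σ k →ₐ[k] B),
      (∀ r, (ι r : A) = ι₀ r) ∧ (∀ i, (Λ (MvPolynomial.X i) : A) = L i) ∧
      Algebra.adjoin k (Set.range ι ∪ Set.range fun i => Λ (MvPolynomial.X i)) = ⊤ := by
  subst hB
  have hmem (i : σ) : L i ∈ Algebra.adjoin k (Set.range ι₀ ∪ Set.range L) :=
    Algebra.subset_adjoin (.inr ⟨i, rfl⟩)
  obtain ⟨Λ, hΛ⟩ := exists_aeval_of_commute (k := k)
    (L := fun i => (⟨L i, hmem i⟩ : Algebra.adjoin k (Set.range ι₀ ∪ Set.range L)))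
    fun i j => Subtype.ext (hL i j)
  refine ⟨ι₀.codRestrict _ fun r => Algebra.subset_adjoin (.inl ⟨r, rfl⟩), Λ, fun _ => rfl,
    fun i => congrArg Subtype.val (hΛ i), ?_⟩
  refine top_unique (Algebra.adjoin_adjoin_coe_preimage.symm.le.trans (Algebra.adjoin_mono ?_))
  rintro ⟨_, _⟩ (⟨r, rfl⟩ | ⟨i, rfl⟩)
  · exact .inl ⟨r, rfl⟩
  · exact .inr ⟨i, hΛ i⟩

section TwistedAction

open Polynomial

variable {k R S A : Type*} [CommRing k] [CommRing R] [Algebra k R] [CommRing S] [Algebra k S]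
  [Algebra R S] [Ring A] [Algebra k A] [Module A S[X]] {n : ℕ}
  {ι : R →ₐ[k] A} {Λ : MvPolynomial (Fin n) k →ₐ[k] A} {δ : Fin n → R → R} {a : Fin n → R}
  {D : Fin n → Derivation k S S} {u : S}

theorem torsionOf_one_eq_span_koszulOp
    (hδ : ∀ i r, Λ (MvPolynomial.X i) * ι r = ι r * Λ (MvPolynomial.X i) + ι (δ i r))
    (hA : Algebra.adjoin k (Set.range ι ∪ Set.range fun i => Λ (MvPolynomial.X i)) = ⊤)
    (ha : RingTheory.Sequence.IsWeaklyRegular R (List.ofFn a))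
    (hinj : Function.Injective (algebraMap R S)) (hu : IsUnit u)
    (hι : ∀ r (p : S[X]), ι r • p = C (algebraMap R S r) * p)
    (hΛ : ∀ i (p : S[X]), Λ (MvPolynomial.X i) • p =
      twistedDeriv (D i) (u * algebraMap R S (a i)) p) :
    Ideal.torsionOf A S[X] 1 =
      Ideal.span (Set.range fun p : Fin n × Fin n => koszulOp ι Λ a p.1 p.2) := by
  refine torsionOf_eq_span_koszulOp hδ ha hA (fun i j => ?_) fun d F hF P hPF hP => ?_
  · simp only [koszulOp, sub_smul, mul_smul, hι, hΛ, twistedDeriv_apply, Derivation.map_one_eq_zero,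
      C_mul]
    ring
  · have hcoeff := coeff_smul_one_of_sub_ofSymbol_mem_orderLT hι hΛ hF hPF
    rw [hP, coeff_zero, aeval_mul_algebraMap_of_isHomogeneous u a hF] at hcoeff
    exact (map_eq_zero_iff _ hinj).1 ((hu.pow d).mul_right_eq_zero.1 hcoeff.symm)

theorem torsionOf_one_eq_span_lt_of_eq_adjoin [IsScalarTower k R S]
    (hDδ : ∀ i r, D i (algebraMap R S r) = algebraMap R S (δ i r))
    (ha : RingTheory.Sequence.IsWeaklyRegular R (List.ofFn a))
    (hinj : Function.Injective (algebraMap R S)) (hu : IsUnit u)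
    (hcomm : ∀ i j, Commute (twistedDeriv (D i) (u * algebraMap R S (a i)))
      (twistedDeriv (D j) (u * algebraMap R S (a j))))
    {B : Subalgebra k (Module.End k S[X])}
    (hB : B = Algebra.adjoin k
      ((Set.range fun r : R => LinearMap.mulLeft k (C (algebraMap R S r))) ∪
        Set.range fun i => twistedDeriv (D i) (u * algebraMap R S (a i)))) :
    Ideal.torsionOf B S[X] 1 = Ideal.span {P : B | ∃ i j, i < j ∧
      (P : Module.End k S[X]) =
        LinearMap.mulLeft k (C (algebraMap R S (a i))) *
            twistedDeriv (D j) (u * algebraMap R S (a j)) -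
          LinearMap.mulLeft k (C (algebraMap R S (a j))) *
            twistedDeriv (D i) (u * algebraMap R S (a i))} := by
  obtain ⟨ι, Λ, hι, hΛ, hA⟩ := exists_algHom_of_eq_adjoin
    ((Algebra.lmul k S[X]).comp (IsScalarTower.toAlgHom k R S[X])) hcomm hB
  have hι' (r : R) (p : S[X]) : ι r • p = C (algebraMap R S r) * p := congr($(hι r) p)
  have hΛ' (i : Fin n) (p : S[X]) : Λ (MvPolynomial.X i) • p =
      twistedDeriv (D i) (u * algebraMap R S (a i)) p := congr($(hΛ i) p)
  have hιΛ (i : Fin n) (r : R) : Λ (MvPolynomial.X i) * ι r =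
      ι r * Λ (MvPolynomial.X i) + ι (δ i r) := by
    refine FaithfulSMul.eq_of_smul_eq_smul fun p : S[X] => ?_
    rw [add_smul, mul_smul, mul_smul, hι', hι', hι', hΛ', hΛ', twistedDeriv_C_mul, hDδ]
  rw [torsionOf_one_eq_span_koszulOp (A := B) hιΛ hA ha hinj hu hι' hΛ',
    span_range_koszulOp_eq_span_lt]
  simp only [koszulOp, Subtype.ext_iff, AddSubgroupClass.coe_sub, MulMemClass.coe_mul, hι, hΛ]
  rfl

end TwistedAction

section Localization

variable {k R S : Type*} [CommRing k] [CommRing R] [CommRing S] [Algebra k S] [Algebra R S]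

theorem derivation_eq_zero_of_isLocalization (M : Submonoid R) [IsLocalization M S]
    {D : Derivation k S S} (hD : ∀ r, D (algebraMap R S r) = 0) : D = 0 := by
  ext x
  obtain ⟨⟨r, s⟩, hs⟩ := IsLocalization.surj M x
  have hsD : algebraMap R S s * D x = 0 := by
    simpa only [Derivation.leibniz, hD, smul_zero, mul_zero, zero_add, smul_eq_mul]
      using congrArg D hs
  exact (IsLocalization.map_units S s).mul_right_eq_zero.1 hsD

variable [Algebra k R]

theorem lie_eq_zero_of_isLocalization (M : Submonoid R) [IsLocalization M S]
    {δ δ' : Derivation k R R} {D D' : Derivation k S S} (h : ⁅δ, δ'⁆ = 0)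
    (hD : ∀ r, D (algebraMap R S r) = algebraMap R S (δ r))
    (hD' : ∀ r, D' (algebraMap R S r) = algebraMap R S (δ' r)) : ⁅D, D'⁆ = 0 := by
  refine derivation_eq_zero_of_isLocalization M fun r => ?_
  rw [Derivation.commutator_apply, hD, hD', hD, hD', ← map_sub, ← Derivation.commutator_apply, h,
    Derivation.zero_apply, map_zero]

theorem apply_invSelf_mul_comm (f : R) [IsLocalization.Away f S]
    {δ δ' : Derivation k R R} {D D' : Derivation k S S} (h : ⁅δ, δ'⁆ = 0)
    (hD : ∀ r, D (algebraMap R S r) = algebraMap R S (δ r))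
    (hD' : ∀ r, D' (algebraMap R S r) = algebraMap R S (δ' r)) :
    D (IsLocalization.Away.invSelf f * algebraMap R S (δ' f)) =
      D' (IsLocalization.Away.invSelf f * algebraMap R S (δ f)) := by
  have hf : IsLocalization.Away.invSelf f * algebraMap R S f = 1 := by
    rw [mul_comm, IsLocalization.Away.mul_invSelf]
  have hδ : δ (δ' f) = δ' (δ f) := by
    rw [← sub_eq_zero, ← Derivation.commutator_apply, h, Derivation.zero_apply]
  simp only [Derivation.leibniz, Derivation.leibniz_of_mul_eq_one _ hf, hD, hD', hδ, smul_eq_mul]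
  ring

end Localization

theorem lie_pderiv_pderiv {k σ : Type*} [CommRing k] (i j : σ) :
    ⁅MvPolynomial.pderiv (R := k) i, MvPolynomial.pderiv (R := k) j⁆ = 0 := by
  classical
  refine MvPolynomial.derivation_ext fun l => ?_
  rw [Derivation.commutator_apply, MvPolynomial.pderiv_X, MvPolynomial.pderiv_X]
  by_cases h1 : j = l <;> by_cases h2 : i = l <;> simp [h1, h2, eq_comm]

end Yano

open Polynomial Yano in
theorem stmt16_general {k R : Type*} [CommRing k] [CommRing R] [Algebra k R] {n : ℕ}
    (δ : Fin n → Derivation k R R) (hδ : ∀ i j, ⁅δ i, δ j⁆ = 0)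
    (f : R) (hf : f ∈ nonZeroDivisors R)
    (hreg : RingTheory.Sequence.IsWeaklyRegular R (List.ofFn fun i => δ i f))
    (Rf : Type*) [CommRing Rf] [Algebra k Rf] [Algebra R Rf] [IsScalarTower k R Rf]
    [IsLocalization.Away f Rf]
    (pd : Fin n → Derivation k Rf Rf)
    (hpd : ∀ i r, pd i (algebraMap R Rf r) = algebraMap R Rf (δ i r))
    (L : Fin n → Module.End k (Polynomial Rf))
    (hL : ∀ i a m, L i (C a * X ^ m) = C (pd i a) * X ^ m +
      X * C (IsLocalization.Away.invSelf f * algebraMap R Rf (δ i f)) * (C a * X ^ m))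
    (Dalg : Subalgebra k (Module.End k (Polynomial Rf)))
    (hDalg : Dalg = Algebra.adjoin k
      ((Set.range fun r : R => LinearMap.mulLeft k (C (algebraMap R Rf r))) ∪ Set.range L)) :
    Ideal.torsionOf Dalg (Polynomial Rf) 1 = Ideal.span {a : Dalg | ∃ i j, i < j ∧
      (a : Module.End k (Polynomial Rf)) =
        LinearMap.mulLeft k (C (algebraMap R Rf (δ i f))) * L j -
          LinearMap.mulLeft k (C (algebraMap R Rf (δ j f))) * L i} := by
  obtain rfl : L = fun i =>
      twistedDeriv (pd i) (IsLocalization.Away.invSelf f * algebraMap R Rf (δ i f)) :=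
    funext fun i => eq_twistedDeriv_of_forall_C_mul_X_pow (hL i)
  exact torsionOf_one_eq_span_lt_of_eq_adjoin hpd hreg
    (IsLocalization.injective Rf (Submonoid.powers_le.2 hf))
    (.of_mul_eq_one_right _ (IsLocalization.Away.mul_invSelf f))
    (fun i j => commute_twistedDeriv
      (lie_eq_zero_of_isLocalization (Submonoid.powers f) (hδ i j) (hpd i) (hpd j))
      (apply_invSelf_mul_comm f (hδ i j) (hpd i) (hpd j))) hDalg

/-- **Proposition 5.3 (Yano).** For `f ∈ R = k[x₁,…,xₙ]` whose partial derivatives form a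
regular sequence, the annihilator `{a ∈ D : a(f^s) = 0}` of `f^s` (where `1 ∈ N = R_f[X]`
represents `f^s`) is a left ideal of the ring `D` of differential operators, and it is
generated by the operators `(∂f/∂x_i)·∂_j − (∂f/∂x_j)·∂_i` for `i < j`. -/
theorem stmt16 {k : Type*} [Field k] [IsAlgClosed k] [CharZero k]
    (n : ℕ) (hn : 1 ≤ n)
    (f : MvPolynomial (Fin n) k) (hf0 : f ≠ 0)
    -- the partial derivatives of `f` form a regular sequence in `R`
    (hreg : RingTheory.Sequence.IsRegular (MvPolynomial (Fin n) k)
      ((List.finRange n).map fun i : Fin n => MvPolynomial.pderiv i f))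
    -- `Rf` is the localization `R_f = Localization.Away f`
    (Rf : Type*) [CommRing Rf] [Algebra k Rf] [Algebra (MvPolynomial (Fin n) k) Rf]
    [IsScalarTower k (MvPolynomial (Fin n) k) Rf] [IsLocalization.Away f Rf]
    -- the unique extensions of the partial derivatives to `k`-derivations of `R_f`
    (pd : Fin n → Derivation k Rf Rf)
    (hpd : ∀ (i : Fin n) (r : MvPolynomial (Fin n) k),
      pd i (algebraMap (MvPolynomial (Fin n) k) Rf r) =
        algebraMap (MvPolynomial (Fin n) k) Rf (MvPolynomial.pderiv i r))
    -- the twisted operators `L_i(u) = ∂_i(u) + X·f⁻¹·(∂f/∂x_i)·u`,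
    -- with `∂_i` acting coefficientwise on `N = R_f[X]`
    (L : Fin n → Module.End k (Polynomial Rf))
    (hL : ∀ (i : Fin n) (a : Rf) (m : ℕ),
      L i (Polynomial.C a * Polynomial.X ^ m) =
        Polynomial.C (pd i a) * Polynomial.X ^ m +
          Polynomial.X * Polynomial.C (IsLocalization.Away.invSelf f *
            algebraMap (MvPolynomial (Fin n) k) Rf (MvPolynomial.pderiv i f)) *
            (Polynomial.C a * Polynomial.X ^ m))
    -- the algebra of operators coming from `D_R`
    (Dalg : Subalgebra k (Module.End k (Polynomial Rf)))
    (hDalg : Dalg = Algebra.adjoin k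
      ((Set.range fun r : MvPolynomial (Fin n) k =>
          (LinearMap.mulLeft k (Polynomial.C
              (algebraMap (MvPolynomial (Fin n) k) Rf r)) :
            Module.End k (Polynomial Rf))) ∪
        Set.range L)) :
    ∃ I : Ideal ↥Dalg,
      (∀ a : ↥Dalg, a ∈ I ↔
        (a : Module.End k (Polynomial Rf)) (1 : Polynomial Rf) = 0) ∧
      I = Ideal.span {a : ↥Dalg | ∃ i j : Fin n, i < j ∧
        (a : Module.End k (Polynomial Rf)) =
          LinearMap.mulLeft k (Polynomial.C
              (algebraMap (MvPolynomial (Fin n) k) Rf (MvPolynomial.pderiv i f))) * L j -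
          LinearMap.mulLeft k (Polynomial.C
              (algebraMap (MvPolynomial (Fin n) k) Rf (MvPolynomial.pderiv j f))) * L i} := by
  exact ⟨Ideal.torsionOf Dalg (Polynomial Rf) 1, fun _ => Iff.rfl, stmt16_general
    (fun i => MvPolynomial.pderiv i) Yano.lie_pderiv_pderiv f (mem_nonZeroDivisors_of_ne_zero hf0)
    (List.ofFn_eq_map ▸ hreg.toIsWeaklyRegular) Rf pd hpd L hL Dalg hDalg⟩
end

section
/- The set B := {b ∈ k[X] : b(X)·1 ∈ D'·(f·1)}, where D'·(f·1) := {a(f·1) : a ∈ D'} ⊆ N, is an ideal of k[X], and B is the principal ideal generated by the polynomial (X + 1)·∏_{λ ∈ Σ(f)} (X + (λ + |w|)). (Equivalently, the Bernstein–Sato polynomial of the weighted homogeneous polynomial f with isolated singularity is b_f(s) = (s+1)·∏_{λ∈Σ(f)}(s + λ + |w|).) -/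
/-!
Malgrange's map identifies `D_R[s] f ^ s` with a submodule of `R[∂ₜ] δ(t - f)`, encoded as `R[X]`,
on which `∂ᵢ` acts by `v ↦ ∂ᵢ v + X fᵢ v` and `s` by `v ↦ X (f v + v')`, with `fᵢ = ∂ᵢ f`. Let `W`
be the image of `D_R[s] f ^ (s + 1)`, the `D_R[s]`-submodule generated by `f`.

Upper bound: `∂ᵢ f = (s + 1) fᵢ`, so `(s + 1) g ∈ W` for `g` in the Jacobian ideal `J`; and for
`g` of weighted degree `q` the Euler field gives `(s + q + |w|) g = ∑ ∂ᵢ (wᵢ xᵢ g)`, where every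
`xᵢ g` has larger weighted degree. Spending one factor for each weight of `R / J` leads from `1`
into `J`.

Lower bound: the singularity being isolated, `f₁, …, fₙ` have only Koszul syzygies, which shows
that a constant in `Q = ∑ ∂ᵢ R[X] + J` lies in `J`. Let `P` be the largest `R`-submodule of `Q`.
Then `(s + 1) P + R f` is stable under `D_R[s]`, so it contains `W`. If it contains `b(s) 1`,
comparing leading terms gives `b = (s + 1) b'` with `b'(s) 1 ∈ P`; for `g ∉ J` of weighted degree
`q`, `b'(s) g ≡ b'(-q - |w|) g` modulo `Q` then forces `b'(-q - |w|) = 0`.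
-/

namespace BernsteinSato

section Koszul

open ExteriorAlgebra MvPolynomial RingTheory.Sequence
open CliffordAlgebra (contractLeft contractLeft_ι contractLeft_ι_mul contractLeft_contractLeft)
open scoped Matrix Pointwise

variable {R M : Type*} [CommRing R] [AddCommGroup M] [Module R M]

theorem mem_ofList_smul_of_smul_mem (N : Submodule R M) [Module.Flat R N] {rs rs' : List R} {r : R}
    (reg : IsWeaklyRegular R (rs ++ r :: rs')) {z : M} (hz : z ∈ N)
    (hrz : r • z ∈ Ideal.ofList rs • N) : z ∈ Ideal.ofList rs • N := by
  have regN : IsWeaklyRegular N (rs ++ r :: rs') :=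
    ((TensorProduct.rid R N).isWeaklyRegular_congr _).mp reg.isWeaklyRegular_lTensor
  have regular : IsSMulRegular (N ⧸ (Ideal.ofList rs • ⊤ : Submodule R N)) r :=
    ((isWeaklyRegular_cons_iff _ _ _).mp ((isWeaklyRegular_append_iff _ _ _).mp regN).2).1
  have mem_iff (y : N) : y ∈ (Ideal.ofList rs • ⊤ : Submodule R N) ↔
      (y : M) ∈ Ideal.ofList rs • N := by
    rw [Submodule.mem_smul_top_iff]
  exact (mem_iff ⟨z, hz⟩).mp
    (mem_of_isSMulRegular_quotient_of_smul_mem regular ((mem_iff (r • ⟨z, hz⟩)).mpr hrz))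

theorem ι_mul_mem_exteriorPower {n : ℕ} (v : M) {x : ExteriorAlgebra R M} (hx : x ∈ ⋀[R]^n M) :
    ι R v * x ∈ ⋀[R]^(n + 1) M := by
  rw [exteriorPower, pow_succ']
  exact Submodule.mul_mem_mul (LinearMap.mem_range_self _ v) hx

theorem contractLeft_mem_exteriorPower (φ : Module.Dual R M) {n : ℕ} {x : ExteriorAlgebra R M}
    (hx : x ∈ ⋀[R]^(n + 1) M) : contractLeft φ x ∈ ⋀[R]^n M := by
  induction n generalizing x with
  | zero =>
    simp only [zero_add, exteriorPower, pow_one] at hx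
    obtain ⟨v, rfl⟩ := hx
    rw [exteriorPower, pow_zero]
    exact Submodule.mem_one.mpr ⟨φ v, (contractLeft_ι ..).symm⟩
  | succ n ih =>
    rw [exteriorPower, pow_succ'] at hx
    refine Submodule.mul_induction_on hx ?_ fun x y hx hy ↦ by
      rw [map_add]; exact add_mem hx hy
    rintro _ ⟨v, rfl⟩ y hy
    rw [ι, contractLeft_ι_mul]
    exact sub_mem (Submodule.smul_mem _ _ hy) (ι_mul_mem_exteriorPower v (ih hy))

theorem map_mem_smul {M' : Type*} [AddCommGroup M'] [Module R M'] (g : M →ₗ[R] M')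
    {I : Ideal R} {N : Submodule R M} {N' : Submodule R M'} (hg : ∀ x ∈ N, g x ∈ N')
    {x : M} (hx : x ∈ I • N) : g x ∈ I • N' := by
  have := Submodule.mem_map_of_mem (f := g) hx
  rw [Submodule.map_smul''] at this
  exact smul_mono_right I (Submodule.map_le_iff_le_comap.mpr hg) this

theorem ofList_append_singleton_smul (rs : List R) (r : R) (N : Submodule R M) :
    Ideal.ofList (rs ++ [r]) • N = Ideal.ofList rs • N ⊔ r • N := by
  rw [Ideal.ofList_append, Submodule.sup_smul, Ideal.ofList_singleton,
    Submodule.ideal_span_singleton_smul]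

theorem exteriorPower_eq_bot_of_finrank_lt [Nontrivial R] [Module.Free R M] [Module.Finite R M]
    {n : ℕ} (hn : Module.finrank R M < n) : ⋀[R]^n M = ⊥ := by
  rw [← Submodule.subsingleton_iff_eq_bot, ← Module.finrank_eq_zero_iff_of_free R,
    exteriorPower.finrank_eq, Nat.choose_eq_zero_of_lt hn]

-- With `∂ = contractLeft φ` and `φ v = r`, the identity `∂ (v ∧ x) = r x - v ∧ ∂ x` makes `v ∧ x` a
-- cycle modulo `rs ++ [r]`, so by induction `v ∧ x ≡ ∂ y + r z` modulo `rs`. Applying `∂` gives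
-- `r (x - ∂ z) ≡ 0` modulo `rs`, where `r` is regular.
theorem exists_sub_contractLeft_mem [Nontrivial R] [Module.Free R M] [Module.Finite R M]
    {φ : Module.Dual R M} {rs rs' : List R} {n : ℕ} (reg : IsWeaklyRegular R (rs ++ rs'))
    (hφ : ∀ r ∈ rs', ∃ v, φ v = r) (hn : Module.finrank R M ≤ n + rs'.length)
    {x : ExteriorAlgebra R M} (hx : x ∈ ⋀[R]^(n + 1) M)
    (hφx : contractLeft φ x ∈ Ideal.ofList rs • ⋀[R]^n M) :
    ∃ y ∈ ⋀[R]^(n + 2) M, x - contractLeft φ y ∈ Ideal.ofList rs • ⋀[R]^(n + 1) M := by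
  induction rs' generalizing rs n x with
  | nil =>
    rw [exteriorPower_eq_bot_of_finrank_lt (n := n + 1) (Nat.lt_succ_of_le hn),
      Submodule.mem_bot] at hx
    exact ⟨0, zero_mem _, by simp [hx]⟩
  | cons r rs' ih =>
    obtain ⟨v, hv⟩ := hφ r List.mem_cons_self
    have dιx : contractLeft φ (ι R v * x) = r • x - ι R v * contractLeft φ x := by
      rw [ι, contractLeft_ι_mul, hv]
    have hιφx : ι R v * contractLeft φ x ∈ Ideal.ofList rs • ⋀[R]^(n + 1) M :=
      map_mem_smul (LinearMap.mulLeft R (ι R v)) (fun _ ↦ ι_mul_mem_exteriorPower v) hφx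
    obtain ⟨y, _, hxy⟩ := ih (rs := rs ++ [r]) (n := n + 1) (by simpa using reg)
      (fun s hs ↦ hφ s (List.mem_cons_of_mem _ hs))
      (by rw [List.length_cons] at hn; omega) (ι_mul_mem_exteriorPower v hx)
      (by
        rw [dιx, ofList_append_singleton_smul, ← neg_sub, neg_mem_iff]
        exact sub_mem (Submodule.mem_sup_left hιφx)
          (Submodule.mem_sup_right (Submodule.smul_mem_pointwise_smul _ _ _ hx)))
    rw [ofList_append_singleton_smul] at hxy
    obtain ⟨m, hm, _, ⟨z, hz, rfl⟩, hmz⟩ := Submodule.mem_sup.mp hxy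
    have smul_eq : r • (x - contractLeft φ z) = ι R v * contractLeft φ x + contractLeft φ m := by
      have := congrArg (contractLeft φ) hmz
      simp only [DistribSMul.toLinearMap_apply, map_add, map_sub, dιx, contractLeft_contractLeft,
        sub_zero] at this
      rw [smul_sub, sub_eq_iff_eq_add, add_assoc, ← map_smul, this, add_sub_cancel]
    refine ⟨z, hz, mem_ofList_smul_of_smul_mem _ reg
      (sub_mem hx (contractLeft_mem_exteriorPower φ hz)) ?_⟩
    rw [smul_eq]
    exact add_mem hιφx
      (map_mem_smul (contractLeft φ) (fun _ ↦ contractLeft_mem_exteriorPower φ) hm)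

variable {σ : Type*} [Fintype σ]

/-- The first syzygies of the family `F` are generated by the Koszul relations
`F j • eᵢ - F i • eⱼ`: the vanishing of the first Koszul homology of `F`. Writing a combination of
these relations as `(c - cᵀ) *ᵥ F`, rather than with a skew-symmetric matrix, avoids any assumption
on the characteristic. -/
def HasKoszulSyzygies (F : σ → R) : Prop :=
  ∀ a : σ → R, a ⬝ᵥ F = 0 → ∃ c : Matrix σ σ R, (c - cᵀ) *ᵥ F = a

theorem exists_contractLeft_eq_ι_mulVec (F : σ → R) {z : ExteriorAlgebra R (σ → R)}
    (hz : z ∈ ⋀[R]^2 (σ → R)) :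
    ∃ c : Matrix σ σ R,
      contractLeft (Fintype.linearCombination R F) z = ι R ((c - cᵀ) *ᵥ F) := by
  rw [exteriorPower, pow_two] at hz
  refine Submodule.mul_induction_on hz ?_ ?_
  · rintro _ ⟨u, rfl⟩ _ ⟨v, rfl⟩
    refine ⟨Matrix.vecMulVec v u, ?_⟩
    have hφ (x : σ → R) : Fintype.linearCombination R F x = x ⬝ᵥ F := rfl
    rw [Matrix.transpose_vecMulVec, Matrix.sub_mulVec, Matrix.vecMulVec_mulVec,
      Matrix.vecMulVec_mulVec, op_smul_eq_smul, op_smul_eq_smul, map_sub, map_smul, map_smul, ι,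
      contractLeft_ι_mul, contractLeft_ι, hφ, hφ, ← Algebra.commutes, ← Algebra.smul_def]
  · rintro x y ⟨c, hc⟩ ⟨d, hd⟩
    refine ⟨c + d, ?_⟩
    rw [map_add, hc, hd, ← map_add, ← Matrix.add_mulVec, Matrix.transpose_add, add_sub_add_comm]

theorem hasKoszulSyzygies_of_isWeaklyRegular {F : σ → R} {rs : List R}
    (reg : IsWeaklyRegular R rs) (hF : ∀ r ∈ rs, r ∈ Ideal.span (Set.range F))
    (hcard : Fintype.card σ ≤ rs.length) : HasKoszulSyzygies F := by
  intro a ha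
  nontriviality R
  obtain ⟨z, hz, haz⟩ := exists_sub_contractLeft_mem (φ := Fintype.linearCombination R F)
    (rs := []) (n := 0) (x := ι R a) reg
    (fun r hr ↦ (Submodule.mem_span_range_iff_exists_fun R).mp (hF r hr)) (by simpa using hcard)
    (by rw [zero_add, exteriorPower, pow_one]; exact LinearMap.mem_range_self _ a)
    (by
      have hφa : Fintype.linearCombination R F a = 0 := ha
      rw [ι, contractLeft_ι, hφa, map_zero]
      exact zero_mem _)
  obtain ⟨c, hc⟩ := exists_contractLeft_eq_ι_mulVec F hz
  rw [Ideal.ofList_nil, Submodule.bot_smul, Submodule.mem_bot, hc, sub_eq_zero, ι_inj] at haz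
  exact ⟨c, haz.symm⟩

theorem mem_span_X_pow_of_X_pow_mul_mem {σ : Type*} {N : σ → ℕ} {s : Set σ} {i : σ} (hi : i ∉ s)
    {n : ℕ} {p : MvPolynomial σ R}
    (hp : X i ^ n * p ∈ Ideal.span ((fun j ↦ (X j ^ N j : MvPolynomial σ R)) '' s)) :
    p ∈ Ideal.span ((fun j ↦ (X j ^ N j : MvPolynomial σ R)) '' s) := by
  have image_eq : (fun j ↦ (X j ^ N j : MvPolynomial σ R)) '' s =
      (monomial · 1) '' ((fun j ↦ Finsupp.single j (N j)) '' s) := by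
    simp only [Set.image_image, X_pow_eq_monomial]
  rw [image_eq, mem_ideal_span_monomial_image] at hp ⊢
  intro m hm
  obtain ⟨_, ⟨j, hj, rfl⟩, hle⟩ := hp (Finsupp.single i n + m) (by
    rwa [X_pow_eq_monomial, mem_support_iff, coeff_monomial_mul, one_mul, ← mem_support_iff])
  refine ⟨_, ⟨j, hj, rfl⟩, ?_⟩
  have hij : i ≠ j := fun h ↦ hi (h ▸ hj)
  simpa [hij] using hle

theorem isWeaklyRegular_X_pow {σ : Type*} (N : σ → ℕ) {l : List σ} (hl : l.Nodup) :
    IsWeaklyRegular (MvPolynomial σ R) (l.map fun i ↦ (X i ^ N i : MvPolynomial σ R)) := by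
  refine ⟨fun i hi ↦ ?_⟩
  have ofList_eq : Ideal.ofList ((l.map fun i ↦ (X i ^ N i : MvPolynomial σ R)).take i) =
      Ideal.span ((fun j ↦ (X j ^ N j : MvPolynomial σ R)) '' {j | j ∈ l.take i}) := by
    rw [Ideal.ofList, ← List.map_take]
    congr 1
    ext
    simp only [List.mem_map, Set.mem_image, Set.mem_ofPred_eq]
  rw [smul_eq_mul, Ideal.mul_top, ofList_eq, isSMulRegular_quotient_iff_mem_of_smul_mem,
    List.getElem_map]
  refine fun p hp ↦ mem_span_X_pow_of_X_pow_mul_mem (fun hmem ↦ ?_) hp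
  obtain ⟨j, hj, hji⟩ := List.mem_take_iff_getElem.mp hmem
  exact (hj.trans_le (min_le_left _ _)).ne (hl.getElem_inj_iff.mp hji)

theorem hasKoszulSyzygies_of_X_pow_mem {F : σ → MvPolynomial σ R} (N : σ → ℕ)
    (hN : ∀ i, X i ^ N i ∈ Ideal.span (Set.range F)) : HasKoszulSyzygies F :=
  hasKoszulSyzygies_of_isWeaklyRegular (isWeaklyRegular_X_pow N Finset.univ.nodup_toList)
    (by simpa using hN) (by simp)

end Koszul

section Twisted

open Polynomial

variable {k R : Type*} [CommRing k] [CommRing R] [Algebra k R]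

/-- The `k`-derivation of `R[X]` acting by `D` on the coefficients. -/
noncomputable def coeffwise (D : Derivation k R R) : Derivation k R[X] R[X] :=
  (PolynomialModule.equivPolynomialSelf : PolynomialModule R R ≃ₗ[R[X]] R[X]).toLinearMap.compDer
    D.mapCoeffs

@[simp]
theorem coeff_coeffwise (D : Derivation k R R) (v : R[X]) (m : ℕ) :
    (coeffwise D v).coeff m = D (v.coeff m) :=
  rfl

@[simp]
theorem coeffwise_C (D : Derivation k R R) (r : R) : coeffwise D (C r) = C (D r) := by
  ext m
  cases m <;> simp [coeff_C]

@[simp]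
theorem coeffwise_X (D : Derivation k R R) : coeffwise D X = 0 := by
  ext m
  simp [coeff_X, apply_ite D]

theorem derivative_coeffwise (D : Derivation k R R) (v : R[X]) :
    derivative (coeffwise D v) = coeffwise D (derivative v) := by
  ext m
  simp only [coeff_derivative, coeff_coeffwise, D.leibniz, map_add, D.map_natCast,
    D.map_one_eq_zero, smul_eq_mul]
  ring

/-- The operator `v ↦ D v + a X v` on `R[X]`, where `D` acts on the coefficients. For `a = D f / f`
this is the action of `D` on `R[s] f ^ s`, with `X` in the role of `s`. -/
noncomputable def twisted (D : Derivation k R R) (a : R) : Module.End k R[X] :=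
  (coeffwise D : R[X] →ₗ[k] R[X]) + LinearMap.mulLeft k (X * C a)

theorem twisted_apply (D : Derivation k R R) (a : R) (v : R[X]) :
    twisted D a v = coeffwise D v + X * C a * v :=
  rfl

theorem twisted_mul (D : Derivation k R R) (a : R) (u v : R[X]) :
    twisted D a (u * v) = coeffwise D u * v + u * twisted D a v := by
  simp only [twisted_apply, Derivation.leibniz, smul_eq_mul]
  ring

theorem twisted_smul (D : Derivation k R R) (a r : R) (v : R[X]) :
    twisted D a (r • v) = D r • v + r • twisted D a v := by
  simp only [smul_eq_C_mul, twisted_mul, coeffwise_C]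

theorem coeff_zero_twisted (D : Derivation k R R) (a : R) (v : R[X]) :
    (twisted D a v).coeff 0 = D (v.coeff 0) := by
  rw [twisted_apply, coeff_add, coeff_coeffwise, mul_assoc, coeff_X_mul_zero, add_zero]

theorem coeff_succ_twisted (D : Derivation k R R) (a : R) (v : R[X]) (m : ℕ) :
    (twisted D a v).coeff (m + 1) = D (v.coeff (m + 1)) + a * v.coeff m := by
  rw [twisted_apply, coeff_add, coeff_coeffwise, mul_assoc, coeff_X_mul, coeff_C_mul]

theorem twisted_comm {D E : Derivation k R R} (hDE : ∀ r, D (E r) = E (D r)) {a b : R}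
    (hab : D b = E a) (v : R[X]) :
    twisted D a (twisted E b v) = twisted E b (twisted D a v) := by
  have coeffwise_comm : coeffwise D (coeffwise E v) = coeffwise E (coeffwise D v) := by
    ext m
    simp only [coeff_coeffwise, hDE]
  simp only [twisted_apply, map_add, Derivation.leibniz, smul_eq_mul, coeffwise_C, coeffwise_X,
    coeffwise_comm, hab]
  ring

/-- The action of `s` on `R[∂ₜ] δ(t - f)`, which is encoded as `R[X]` with `X = -∂ₜ`: there `t` acts
as `f + d/dX`, and `s` is `-∂ₜ t`. -/
noncomputable def sAction (f : R) : Module.End R R[X] :=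
  LinearMap.mulLeft R X ∘ₗ (LinearMap.mulLeft R (C f) + derivative)

theorem sAction_apply (f : R) (v : R[X]) : sAction f v = X * (C f * v + derivative v) :=
  rfl

/-- The action of the derivation `D` on `R[∂ₜ] δ(t - f)`, encoded as `R[X]` with `X = -∂ₜ`. -/
noncomputable def nabla (f : R) (D : Derivation k R R) : Module.End k R[X] :=
  twisted D (D f)

theorem nabla_smul (f : R) (D : Derivation k R R) (r : R) (v : R[X]) :
    nabla f D (r • v) = D r • v + r • nabla f D v :=
  twisted_smul D (D f) r v

theorem nabla_sAction (f : R) (D : Derivation k R R) (v : R[X]) :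
    nabla f D (sAction f v) = sAction f (nabla f D v) := by
  simp only [nabla, sAction_apply, twisted_apply, map_add, Derivation.leibniz, smul_eq_mul,
    coeffwise_C, coeffwise_X, derivative_mul, derivative_X, derivative_C, derivative_coeffwise]
  ring

theorem nabla_C (f : R) (D : Derivation k R R) :
    nabla f D (C f) = (sAction f + 1) (C (D f)) := by
  simp only [nabla, twisted_apply, LinearMap.add_apply, Module.End.one_apply, sAction_apply,
    coeffwise_C, derivative_C]
  ring

theorem eq_zero_of_sAction_add_one_eq_C [IsDomain R] {f : R} (hf : f ≠ 0) {v : R[X]} {r : R}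
    (h : (sAction f + 1) v = C r) : v = 0 := by
  by_contra hv
  have leading := congrArg (coeff · (v.natDegree + 1)) h
  simp only [LinearMap.add_apply, Module.End.one_apply, sAction_apply, coeff_add,
    coeff_X_mul, coeff_C_mul, coeff_derivative, coeff_C_succ,
    coeff_eq_zero_of_natDegree_lt (Nat.lt_succ_self v.natDegree), zero_mul, add_zero,
    coeff_natDegree] at leading
  exact mul_ne_zero hf (leadingCoeff_ne_zero.mpr hv) leading

end Twisted

section Divergence

open Polynomial
open scoped Matrix

variable {k R : Type*} [CommRing k] [CommRing R] [Algebra k R] {σ : Type*} [Fintype σ]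

theorem sum_sum_map_sub_swap_eq_zero {M N : Type*} [AddCommGroup M] [AddCommGroup N]
    {g : σ → σ → M →+ N} (hg : ∀ i j, g i j = g j i) (c : σ → σ → M) :
    ∑ i, ∑ j, g i j (c i j - c j i) = 0 := by
  simp only [map_sub, Finset.sum_sub_distrib]
  rw [sub_eq_zero, Finset.sum_comm]
  simp only [hg]

/-- The map `v ↦ ∑ Dᵢ vᵢ` for the action of the derivations `D i` on `R[∂ₜ] δ(t - f)`. When `D` is
the family of partial derivatives, its cokernel is the top de Rham cohomology of this module. -/
noncomputable def divergence (f : R) (D : σ → Derivation k R R) : (σ → R[X]) →ₗ[k] R[X] :=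
  ∑ i, nabla f (D i) ∘ₗ LinearMap.proj i

theorem divergence_apply (f : R) (D : σ → Derivation k R R) (v : σ → R[X]) :
    divergence f D v = ∑ i, nabla f (D i) (v i) := by
  simp [divergence]

variable {f : R} {D : σ → Derivation k R R}

theorem nabla_mem_range_divergence (i : σ) (v : R[X]) :
    nabla f (D i) v ∈ LinearMap.range (divergence f D) := by
  classical
  refine ⟨Pi.single i v, ?_⟩
  rw [divergence_apply, Finset.sum_eq_single_of_mem i (Finset.mem_univ i) fun j _ hj ↦ by
    rw [Pi.single_eq_of_ne hj, map_zero], Pi.single_eq_same]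

theorem sAction_mem_range_divergence {z : R[X]} (hz : z ∈ LinearMap.range (divergence f D)) :
    sAction f z ∈ LinearMap.range (divergence f D) := by
  obtain ⟨v, rfl⟩ := hz
  exact ⟨fun i ↦ sAction f (v i), by simp only [divergence_apply, nabla_sAction, map_sum]⟩

theorem dotProduct_coeff_eq_zero_of_divergence_eq_C {v : σ → R[X]} {m : ℕ}
    (hv : ∀ i, (v i).natDegree ≤ m) {g : R} (h : divergence f D v = C g) :
    (fun i ↦ (v i).coeff m) ⬝ᵥ (fun i ↦ D i f) = 0 := by
  have top := congrArg (coeff · (m + 1)) h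
  simpa only [divergence_apply, finsetSum_coeff, nabla, coeff_succ_twisted, coeff_C_succ,
    coeff_eq_zero_of_natDegree_lt (Nat.lt_succ_of_le (hv _)), map_zero, zero_add, dotProduct,
    mul_comm] using top

theorem divergence_nabla_sub_transpose (hD : ∀ i j r, D i (D j r) = D j (D i r))
    (c : Matrix σ σ R) (m : ℕ) :
    divergence f D (fun i ↦ ∑ j, nabla f (D j) (C ((c - cᵀ) i j) * X ^ m)) = 0 := by
  simp only [divergence_apply, map_sum]
  convert sum_sum_map_sub_swap_eq_zero
    (g := fun i j ↦ (nabla f (D i) * nabla f (D j)).toAddMonoidHom) ?_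
    (fun i j ↦ C (c i j) * X ^ m) using 5
  · simp [sub_mul]
  · intro i j
    refine AddMonoidHom.ext fun v ↦ ?_
    exact twisted_comm (hD i j) (hD i j f) v

-- The top coefficients of `v` form a syzygy of the `D i f`. The Koszul relation that kills them
-- lifts to a family of divergence zero, because the operators `nabla f (D i)` commute.
theorem exists_natDegree_le_of_divergence_eq_C (hD : ∀ i j r, D i (D j r) = D j (D i r))
    (koszul : HasKoszulSyzygies fun i ↦ D i f) {v : σ → R[X]} {m : ℕ}
    (hv : ∀ i, (v i).natDegree ≤ m + 1) {g : R} (h : divergence f D v = C g) :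
    ∃ v' : σ → R[X], (∀ i, (v' i).natDegree ≤ m) ∧ divergence f D v' = C g := by
  obtain ⟨c, hc⟩ := koszul _ (dotProduct_coeff_eq_zero_of_divergence_eq_C hv h)
  refine ⟨v - fun i ↦ ∑ j, nabla f (D j) (C ((c - cᵀ) i j) * X ^ m), fun i ↦ ?_, by
    rw [map_sub, divergence_nabla_sub_transpose hD, sub_zero, h]⟩
  rw [natDegree_le_iff_coeff_eq_zero]
  intro N hN
  obtain ⟨N, rfl⟩ := Nat.exists_eq_succ_of_ne_zero (Nat.ne_zero_of_lt hN)
  have hNm : N + 1 ≠ m := hN.ne'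
  rw [Pi.sub_apply, coeff_sub, finsetSum_coeff]
  simp only [nabla, coeff_succ_twisted, coeff_C_mul_X_pow, if_neg hNm, map_zero, zero_add]
  rcases (Nat.le_of_lt_succ hN).eq_or_lt with rfl | hlt
  · rw [sub_eq_zero, ← congrFun hc i]
    simp only [Matrix.mulVec, dotProduct, if_true, mul_comm]
  · rw [coeff_eq_zero_of_natDegree_lt ((hv i).trans_lt (Nat.succ_lt_succ hlt))]
    simp only [if_neg hlt.ne', mul_zero, Finset.sum_const_zero, sub_zero]

theorem sum_derivation_mem_span (hD : ∀ i j r, D i (D j r) = D j (D i r))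
    (koszul : HasKoszulSyzygies fun i ↦ D i f) {a : σ → R} (ha : a ⬝ᵥ (fun i ↦ D i f) = 0) :
    ∑ i, D i (a i) ∈ Ideal.span (Set.range fun i ↦ D i f) := by
  obtain ⟨c, rfl⟩ := koszul a ha
  have hessian : ∑ i, ∑ j, D i (D j f) * (c i j - c j i) = 0 :=
    sum_sum_map_sub_swap_eq_zero (g := fun i j ↦ AddMonoidHom.mulLeft (D i (D j f)))
      (fun i j ↦ by rw [hD]) c
  simp only [Matrix.mulVec, dotProduct, Matrix.sub_apply, Matrix.transpose_apply, map_sum,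
    Derivation.leibniz, smul_eq_mul, Finset.sum_add_distrib]
  simp only [mul_comm (c _ _ - c _ _), hessian, zero_add]
  exact sum_mem fun i _ ↦ sum_mem fun j _ ↦
    Ideal.mul_mem_right _ _ (Ideal.subset_span ⟨j, rfl⟩)

theorem mem_span_of_divergence_eq_C (hD : ∀ i j r, D i (D j r) = D j (D i r))
    (koszul : HasKoszulSyzygies fun i ↦ D i f) {v : σ → R[X]} {g : R} (h : divergence f D v = C g) :
    g ∈ Ideal.span (Set.range fun i ↦ D i f) := by
  obtain ⟨m, hm⟩ : ∃ m, ∀ i, (v i).natDegree ≤ m :=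
    ⟨_, fun i ↦ Finset.le_sup (f := fun i ↦ (v i).natDegree) (Finset.mem_univ i)⟩
  induction m generalizing v with
  | zero =>
    have coeff_zero := congrArg (coeff · 0) h
    simp only [divergence_apply, finsetSum_coeff, nabla, coeff_zero_twisted, coeff_C_zero]
      at coeff_zero
    rw [← coeff_zero]
    exact sum_derivation_mem_span hD koszul (dotProduct_coeff_eq_zero_of_divergence_eq_C hm h)
  | succ m ih =>
    obtain ⟨v', hv', h'⟩ := exists_natDegree_le_of_divergence_eq_C hD koszul hm h
    exact ih h' hv'

end Divergence

section Euler

open MvPolynomial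

variable {σ k : Type*}

theorem pderiv_comm [CommRing k] (i j : σ) (g : MvPolynomial σ k) :
    pderiv i (pderiv j g) = pderiv j (pderiv i g) := by
  classical
  have : ⁅pderiv (R := k) i, pderiv (R := k) j⁆ = 0 := by
    refine derivation_ext fun l ↦ ?_
    simp only [Derivation.commutator_apply, pderiv_X, Pi.single_apply, apply_ite (pderiv _),
      pderiv_one, map_zero, ite_self, sub_self, Derivation.zero_apply]
  exact sub_eq_zero.mp (DFunLike.congr_fun this g)

/-- The ideal generated by the partial derivatives of `f`. -/
noncomputable def jacobianIdeal [CommRing k] (f : MvPolynomial σ k) : Ideal (MvPolynomial σ k) :=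
  Ideal.span (Set.range fun i ↦ pderiv i f)

/-- The set `Σ(f)` of weighted degrees of weighted homogeneous polynomials outside the Jacobian
ideal of `f`. -/
def spectralWeights [CommRing k] (w : σ → ℚ) (f : MvPolynomial σ k) : Set ℚ :=
  {q | ∃ g, g ∉ jacobianIdeal f ∧ g.IsWeightedHomogeneous w q}

variable {w : σ → ℚ}

theorem constantCoeff_eq_zero_of_isWeightedHomogeneous_one [CommSemiring k] {f : MvPolynomial σ k}
    (hf : f.IsWeightedHomogeneous w 1) : constantCoeff f = 0 := by
  by_contra h
  simpa using hf h

theorem exists_X_pow_mem_jacobianIdeal [CommRing k] {f : MvPolynomial σ k} (hw : ∀ i, 0 < w i)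
    (finite : (spectralWeights w f).Finite) (i : σ) : ∃ m : ℕ, X i ^ m ∈ jacobianIdeal f := by
  by_contra! hX
  have mapsTo (m : ℕ) : m • w i ∈ spectralWeights w f :=
    ⟨X i ^ m, hX m, (isWeightedHomogeneous_X k w i).pow m⟩
  exact Set.infinite_of_injective_forall_mem (nsmul_left_strictMono (hw i)).injective mapsTo finite

theorem hasKoszulSyzygies_pderiv [Fintype σ] [CommRing k] {f : MvPolynomial σ k}
    (hw : ∀ i, 0 < w i) (finite : (spectralWeights w f).Finite) :
    HasKoszulSyzygies fun i ↦ pderiv i f := by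
  choose N hN using exists_X_pow_mem_jacobianIdeal hw finite
  exact hasKoszulSyzygies_of_X_pow_mem N hN

variable [Fintype σ] [Field k]

/-- The Euler vector field `∑ wᵢ xᵢ ∂ᵢ`, which multiplies a weighted homogeneous polynomial by its
weighted degree. -/
noncomputable def euler (w : σ → ℚ) : Derivation k (MvPolynomial σ k) (MvPolynomial σ k) :=
  ∑ i, (w i : k) • (X i : MvPolynomial σ k) • pderiv i

theorem euler_apply (w : σ → ℚ) (g : MvPolynomial σ k) :
    euler w g = ∑ i, (w i : k) • (X i * pderiv i g) := by
  rw [euler, ← Derivation.coeFnAddMonoidHom_apply, map_sum, Finset.sum_apply]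
  rfl

variable [CharZero k]

theorem euler_eq_smul {g : MvPolynomial σ k} {q : ℚ}
    (hg : g.IsWeightedHomogeneous w q) : euler w g = (q : k) • g := by
  have euler_monomial (d : σ →₀ ℕ) (r : k) :
      euler w (monomial d r) = (Finsupp.weight w d : k) • monomial d r := by
    simp only [euler_apply, X_mul_pderiv_monomial, Finsupp.weight_eq_sum, Rat.cast_sum,
      nsmul_eq_mul, Rat.cast_mul, Rat.cast_natCast, Finset.sum_smul, mul_comm (d _ : k), mul_smul,
      Nat.cast_smul_eq_nsmul]
  rw [g.as_sum, map_sum, Finset.smul_sum]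
  refine Finset.sum_congr rfl fun d hd ↦ ?_
  rw [euler_monomial, hg (mem_support_iff.mp hd)]

variable {f : MvPolynomial σ k}

theorem mem_jacobianIdeal_self {σ : Type*} [Finite σ] {w : σ → ℚ} {f : MvPolynomial σ k}
    (hf : f.IsWeightedHomogeneous w 1) : f ∈ jacobianIdeal f := by
  have := Fintype.ofFinite σ
  suffices euler w f ∈ jacobianIdeal f by
    rwa [euler_eq_smul hf, Rat.cast_one, one_smul] at this
  rw [euler_apply]
  exact sum_mem fun i _ ↦ Submodule.smul_of_tower_mem (jacobianIdeal f) (w i : k)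
    (Ideal.mul_mem_left _ _ (Ideal.subset_span ⟨i, rfl⟩))

theorem euler_mem_jacobianIdeal (hf : f.IsWeightedHomogeneous w 1) {g : MvPolynomial σ k}
    (hg : g ∈ jacobianIdeal f) : euler w g ∈ jacobianIdeal f := by
  induction hg using Submodule.span_induction with
  | mem _ h =>
    obtain ⟨i, rfl⟩ := h
    rw [euler_eq_smul (hf.pderiv (sub_add_cancel 1 (w i)))]
    exact Submodule.smul_of_tower_mem _ _ (Ideal.subset_span ⟨i, rfl⟩)
  | zero => simp only [map_zero, zero_mem]
  | add _ _ _ _ ih ih' => simpa only [map_add] using add_mem ih ih'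
  | smul a b hb ih =>
    rw [smul_eq_mul, Derivation.leibniz]
    exact add_mem (Ideal.mul_mem_left _ _ ih) (Ideal.mul_mem_right _ _ hb)

theorem divergence_euler (f g : MvPolynomial σ k) :
    divergence f pderiv (fun i ↦ Polynomial.C ((w i : k) • X i * g)) =
      Polynomial.X * Polynomial.C (euler w f * g) +
        Polynomial.C (euler w g + ((∑ i, w i : ℚ) : k) • g) := by
  have nabla_euler (i : σ) : nabla f (pderiv i) (Polynomial.C ((w i : k) • X i * g)) =
      Polynomial.X * Polynomial.C ((w i : k) • (X i * pderiv i f) * g) +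
        Polynomial.C ((w i : k) • (X i * pderiv i g) + (w i : k) • g) := by
    simp only [nabla, twisted_apply, coeffwise_C, Derivation.leibniz, pderiv_C,
      pderiv_X_self, smul_eq_mul, smul_eq_C_mul, map_add, map_mul, map_one, map_zero]
    ring
  simp only [divergence_apply, nabla_euler, Finset.sum_add_distrib, ← Finset.mul_sum, ← map_sum,
    ← Finset.sum_mul, ← Finset.sum_smul, ← euler_apply, Rat.cast_sum]

theorem divergence_euler_of_isWeightedHomogeneous (hf : f.IsWeightedHomogeneous w 1)
    (g : MvPolynomial σ k) :
    divergence f pderiv (fun i ↦ Polynomial.C ((w i : k) • X i * g)) =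
      sAction f (Polynomial.C g) + Polynomial.C (euler w g + ((∑ i, w i : ℚ) : k) • g) := by
  rw [divergence_euler, euler_eq_smul hf, Rat.cast_one, one_smul, sAction_apply,
    Polynomial.derivative_C, add_zero, map_mul]

end Euler

section Intertwining

open Polynomial

variable {k R M R' M' : Type*} [CommRing k] [CommRing R] [Algebra k R] [AddCommGroup M]
  [Module k M] [Module R M] [IsScalarTower k R M] [CommRing R'] [Algebra k R']
  [AddCommGroup M'] [Module k M'] [Module R' M'] [IsScalarTower k R' M']

theorem aeval_apply_mem {N : Submodule k M} {T : Module.End R M} (hT : ∀ v ∈ N, T v ∈ N)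
    (b : k[X]) {v : M} (hv : v ∈ N) : aeval T b v ∈ N :=
  aeval_apply_smul_mem_of_le_comap' hv b T hT

theorem map_aeval_apply {T : Module.End R M} {T' : Module.End R' M'} {g : M →ₗ[k] M'}
    (hg : ∀ v, g (T v) = T' (g v)) (b : k[X]) (v : M) :
    g (aeval T b v) = aeval T' b (g v) := by
  induction b using Polynomial.induction_on generalizing v with
  | C a => simp only [aeval_C, Module.algebraMap_end_apply, map_smul]
  | add p q hp hq => simp only [map_add, LinearMap.add_apply, hp, hq]
  | monomial n a h =>
    simp only [pow_succ, ← mul_assoc, map_mul _ _ X, Module.End.mul_apply, h, aeval_X, hg]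

theorem aeval_sAction_nabla (f : R) (D : Derivation k R R) (b : k[X]) (v : R[X]) :
    aeval (sAction f) b (nabla f D v) = nabla f D (aeval (sAction f) b v) :=
  (map_aeval_apply (nabla_sAction f D) b v).symm

end Intertwining

section UpperBound

open MvPolynomial

theorem sAction_add_one_C_mem {σ k : Type*} [CommRing k] {f : MvPolynomial σ k}
    {W : Submodule (MvPolynomial σ k) (Polynomial (MvPolynomial σ k))} (hfW : Polynomial.C f ∈ W)
    (hnabla : ∀ i, ∀ v ∈ W, nabla f (pderiv i) v ∈ W) {g : MvPolynomial σ k}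
    (hg : g ∈ jacobianIdeal f) : (sAction f + 1) (Polynomial.C g) ∈ W := by
  suffices jacobianIdeal f ≤ W.comap ((sAction f + 1) ∘ₗ Polynomial.monomial 0) from this hg
  refine Ideal.span_le.mpr ?_
  rintro _ ⟨i, rfl⟩
  have nabla_mem := hnabla i _ hfW
  rwa [nabla_C] at nabla_mem

variable {σ k : Type*} [Fintype σ] [Field k] {w : σ → ℚ} {f : MvPolynomial σ k}
  {W : Submodule (MvPolynomial σ k) (Polynomial (MvPolynomial σ k))}

/-- The candidate `(s + 1) ∏ (s + q + |w|)` for the Bernstein–Sato polynomial, where `q` runs over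
`S` and `s` is the variable `X`. -/
noncomputable def spectralPolynomial (k : Type*) [Field k] (w : σ → ℚ) (S : Finset ℚ) :
    Polynomial k :=
  (Polynomial.X + 1) * ∏ q ∈ S, (Polynomial.X + Polynomial.C ((q + ∑ i, w i : ℚ) : k))

theorem spectralPolynomial_erase_mul {T : Finset ℚ} {q : ℚ} (hq : q ∈ T) :
    spectralPolynomial k w (T.erase q) *
      (Polynomial.X + Polynomial.C ((q + ∑ i, w i : ℚ) : k)) = spectralPolynomial k w T := by
  rw [spectralPolynomial, mul_assoc, Finset.prod_erase_mul _ _ hq, spectralPolynomial]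

variable [CharZero k]

theorem aeval_sAction_add_C_eq_divergence (hf : f.IsWeightedHomogeneous w 1)
    {g : MvPolynomial σ k} {q : ℚ} (hg : g.IsWeightedHomogeneous w q) :
    Polynomial.aeval (sAction f) (Polynomial.X + Polynomial.C ((q + ∑ i, w i : ℚ) : k))
        (Polynomial.C g) =
      divergence f pderiv (fun i ↦ Polynomial.C ((w i : k) • X i * g)) := by
  rw [divergence_euler_of_isWeightedHomogeneous hf, euler_eq_smul hg, ← add_smul, ← Rat.cast_add]
  simp only [map_add, Polynomial.aeval_X, Polynomial.aeval_C, LinearMap.add_apply,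
    Module.algebraMap_end_apply, ← Polynomial.smul_C]

-- Multiplying by `s + q + |w|` turns `g` into a divergence of polynomials of weighted degree `> q`,
-- so each factor is spent on one weight until `g` lies in the Jacobian ideal.
theorem aeval_spectralPolynomial_C_mem (hw : ∀ i, 0 < w i) (hf : f.IsWeightedHomogeneous w 1)
    (hfW : Polynomial.C f ∈ W) (hnabla : ∀ i, ∀ v ∈ W, nabla f (pderiv i) v ∈ W)
    (hsAction : ∀ v ∈ W, sAction f v ∈ W) (T : Finset ℚ) {g : MvPolynomial σ k} {q : ℚ}
    (hg : g.IsWeightedHomogeneous w q) (hT : ∀ p ∈ spectralWeights w f, q ≤ p → p ∈ T) :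
    Polynomial.aeval (sAction f) (spectralPolynomial k w T) (Polynomial.C g) ∈ W := by
  induction T using Finset.strongInduction generalizing g q with
  | H T ih =>
    by_cases hgJ : g ∈ jacobianIdeal f
    · rw [spectralPolynomial, mul_comm, map_mul, Module.End.mul_apply, map_add, map_one,
        Polynomial.aeval_X]
      exact aeval_apply_mem (N := W.restrictScalars k) hsAction _
        (sAction_add_one_C_mem hfW hnabla hgJ)
    · have hqT : q ∈ T := hT q ⟨g, hgJ, hg⟩ le_rfl
      rw [← spectralPolynomial_erase_mul hqT, map_mul, Module.End.mul_apply,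
        aeval_sAction_add_C_eq_divergence hf hg, divergence_apply, map_sum]
      refine sum_mem fun i _ ↦ ?_
      have hXg : ((w i : k) • X i * g).IsWeightedHomogeneous w (w i + q) :=
        ((weightedHomogeneousSubmodule k w _).smul_mem _ (isWeightedHomogeneous_X k w i)).mul hg
      have hT_erase (p : ℚ) (hp : p ∈ spectralWeights w f) (hle : w i + q ≤ p) :
          p ∈ T.erase q := by
        have hqp : q < p := (lt_add_of_pos_left q (hw i)).trans_le hle
        exact Finset.mem_erase.mpr ⟨hqp.ne', hT p hp hqp.le⟩
      rw [aeval_sAction_nabla]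
      exact hnabla i _ (ih _ (Finset.erase_ssubset hqT) hXg hT_erase)

theorem aeval_sAction_one_mem_of_spectralPolynomial_dvd (hw : ∀ i, 0 < w i)
    (hf : f.IsWeightedHomogeneous w 1) (hfW : Polynomial.C f ∈ W)
    (hnabla : ∀ i, ∀ v ∈ W, nabla f (pderiv i) v ∈ W) (hsAction : ∀ v ∈ W, sAction f v ∈ W)
    {S : Finset ℚ} (hS : spectralWeights w f ⊆ S) {b : Polynomial k}
    (hb : spectralPolynomial k w S ∣ b) : Polynomial.aeval (sAction f) b 1 ∈ W := by
  obtain ⟨c, rfl⟩ := hb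
  rw [mul_comm, map_mul]
  exact aeval_apply_mem (N := W.restrictScalars k) hsAction c
    (aeval_spectralPolynomial_C_mem hw hf hfW hnabla hsAction S (isWeightedHomogeneous_one k w)
      fun p hp _ ↦ hS hp)

end UpperBound

section LowerBound

open MvPolynomial

variable {σ k : Type*} [Fintype σ] [Field k] {w : σ → ℚ} {f : MvPolynomial σ k}

/-- The elements of `R[X]` that are a divergence plus a constant in the Jacobian ideal. This
subspace detects the Jacobian ideal: under the Koszul condition, its constants all lie in `J_f`. -/
noncomputable def negligible (f : MvPolynomial σ k) : Submodule k (Polynomial (MvPolynomial σ k)) :=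
  LinearMap.range (divergence f pderiv) ⊔
    (Submodule.map (Polynomial.monomial 0) (jacobianIdeal f)).restrictScalars k

theorem mem_negligible {v : Polynomial (MvPolynomial σ k)} :
    v ∈ negligible f ↔ ∃ z ∈ LinearMap.range (divergence f pderiv), ∃ h ∈ jacobianIdeal f,
      z + Polynomial.C h = v := by
  simp only [negligible, Submodule.mem_sup, Submodule.restrictScalars_mem, Submodule.mem_map,
    exists_exists_and_eq_and, Polynomial.monomial_zero_left]

theorem C_mem_negligible {h : MvPolynomial σ k} (hh : h ∈ jacobianIdeal f) :
    Polynomial.C h ∈ negligible f :=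
  mem_negligible.mpr ⟨0, zero_mem _, h, hh, zero_add _⟩

theorem mem_jacobianIdeal_of_C_mem_negligible (koszul : HasKoszulSyzygies fun i ↦ pderiv i f)
    {g : MvPolynomial σ k} (hg : Polynomial.C g ∈ negligible f) : g ∈ jacobianIdeal f := by
  obtain ⟨_, ⟨v, rfl⟩, h, hh, hvh⟩ := mem_negligible.mp hg
  have hv : divergence f pderiv v = Polynomial.C (g - h) := by
    rw [map_sub, eq_sub_iff_add_eq, hvh]
  exact (Submodule.sub_mem_iff_left _ hh).mp (mem_span_of_divergence_eq_C pderiv_comm koszul hv)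

/-- The largest `R`-submodule of `R[X]` contained in `negligible f`. -/
def negligibleCore (f : MvPolynomial σ k) :
    Submodule (MvPolynomial σ k) (Polynomial (MvPolynomial σ k)) where
  carrier := {v | ∀ r : MvPolynomial σ k, r • v ∈ negligible f}
  add_mem' hu hv r := by
    rw [smul_add]
    exact add_mem (hu r) (hv r)
  zero_mem' r := by
    rw [smul_zero]
    exact zero_mem _
  smul_mem' r v hv q := by
    rw [smul_smul]
    exact hv (q * r)

theorem C_mem_negligibleCore {h : MvPolynomial σ k} (hh : h ∈ jacobianIdeal f) :
    Polynomial.C h ∈ negligibleCore f := fun r ↦ by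
  rw [Polynomial.smul_C]
  exact C_mem_negligible (Ideal.mul_mem_left _ r hh)

theorem nabla_mem_negligibleCore (i : σ) {v : Polynomial (MvPolynomial σ k)}
    (hv : v ∈ negligibleCore f) : nabla f (pderiv i) v ∈ negligibleCore f := fun r ↦ by
  have leibniz : r • nabla f (pderiv i) v = nabla f (pderiv i) (r • v) - pderiv i r • v :=
    eq_sub_of_add_eq' (nabla_smul f _ r v).symm
  rw [leibniz]
  exact sub_mem (Submodule.mem_sup_left (nabla_mem_range_divergence i _)) (hv _)

/-- An `R`-submodule of `R[X]` that contains `f` and is stable under `s` and the partial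
derivatives, hence contains `D_R[s] · f`. -/
noncomputable def bernsteinBound (f : MvPolynomial σ k) :
    Submodule (MvPolynomial σ k) (Polynomial (MvPolynomial σ k)) :=
  (negligibleCore f).map (sAction f + 1) ⊔ Submodule.span _ {Polynomial.C f}

theorem mem_bernsteinBound {u : Polynomial (MvPolynomial σ k)} :
    u ∈ bernsteinBound f ↔ ∃ v ∈ negligibleCore f, ∃ q : MvPolynomial σ k,
      (sAction f + 1) v + q • Polynomial.C f = u := by
  simp only [bernsteinBound, Submodule.mem_sup, Submodule.mem_map, Submodule.mem_span_singleton,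
    exists_exists_and_eq_and, exists_exists_eq_and]

theorem C_mem_bernsteinBound (f : MvPolynomial σ k) : Polynomial.C f ∈ bernsteinBound f :=
  Submodule.mem_sup_right (Submodule.mem_span_singleton_self _)

theorem nabla_mem_bernsteinBound (i : σ) {u : Polynomial (MvPolynomial σ k)}
    (hu : u ∈ bernsteinBound f) : nabla f (pderiv i) u ∈ bernsteinBound f := by
  obtain ⟨v, hv, q, rfl⟩ := mem_bernsteinBound.mp hu
  have hC : Polynomial.C (q * pderiv i f) ∈ negligibleCore f :=
    C_mem_negligibleCore (Ideal.mul_mem_left _ _ (Ideal.subset_span ⟨i, rfl⟩))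
  refine mem_bernsteinBound.mpr ⟨_, add_mem (nabla_mem_negligibleCore i hv) hC, pderiv i q, ?_⟩
  rw [← smul_eq_mul, ← Polynomial.smul_C]
  simp only [map_add, map_smul, nabla_smul, nabla_C, LinearMap.add_apply, Module.End.one_apply,
    nabla_sAction]
  abel

theorem exists_eq_mul_of_aeval_sAction_one_mem_bernsteinBound (hf0 : f ≠ 0)
    (hf : f.IsWeightedHomogeneous w 1) {b : Polynomial k}
    (hb : Polynomial.aeval (sAction f) b 1 ∈ bernsteinBound f) :
    ∃ b', b = (Polynomial.X + 1) * b' ∧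
      Polynomial.aeval (sAction f) b' 1 ∈ negligibleCore f := by
  obtain ⟨v, hv, q, hvq⟩ := mem_bernsteinBound.mp hb
  obtain ⟨b', hb'⟩ := Polynomial.X_sub_C_dvd_sub_C_eval (a := -1) (p := b)
  have b_eq : b = (Polynomial.X + 1) * b' + Polynomial.C (b.eval (-1)) := by
    rw [← sub_eq_iff_eq_add, hb', map_neg, map_one, sub_neg_eq_add]
  have key : (sAction f + 1) (Polynomial.aeval (sAction f) b' 1 - v) =
      Polynomial.C (q * f - C (b.eval (-1))) := by
    have expand : Polynomial.aeval (sAction f) b 1 =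
        (sAction f + 1) (Polynomial.aeval (sAction f) b' 1) + Polynomial.C (C (b.eval (-1))) := by
      conv_lhs => rw [b_eq]
      simp only [map_add, map_mul, map_one, Polynomial.aeval_X, Polynomial.aeval_C,
        LinearMap.add_apply, Module.End.mul_apply, Module.algebraMap_end_apply]
      rw [Module.End.one_apply, ← map_one Polynomial.C, Polynomial.smul_C, smul_eq_C_mul, mul_one]
    rw [map_sub, eq_sub_of_add_eq expand.symm, eq_sub_of_add_eq hvq, map_sub, ← smul_eq_mul,
      ← Polynomial.smul_C]
    abel
  have hv' := eq_zero_of_sAction_add_one_eq_C hf0 key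
  rw [hv', map_zero, eq_comm, Polynomial.C_eq_zero] at key
  have hb1 : b.eval (-1) = 0 := by
    have := congrArg constantCoeff key
    simpa [constantCoeff_eq_zero_of_isWeightedHomogeneous_one hf] using this
  refine ⟨b', ?_, ?_⟩
  · rw [b_eq, hb1]; simp
  · rwa [sub_eq_zero.mp hv']

variable [CharZero k]

theorem sAction_mem_negligible (hf : f.IsWeightedHomogeneous w 1)
    {v : Polynomial (MvPolynomial σ k)} (hv : v ∈ negligible f) : sAction f v ∈ negligible f := by
  obtain ⟨z, hz, h, hh, rfl⟩ := mem_negligible.mp hv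
  rw [map_add, eq_sub_of_add_eq (divergence_euler_of_isWeightedHomogeneous hf h).symm]
  have euler_mem : euler w h + ((∑ i, w i : ℚ) : k) • h ∈ jacobianIdeal f :=
    add_mem (euler_mem_jacobianIdeal hf hh) (Submodule.smul_of_tower_mem _ _ hh)
  exact add_mem (Submodule.mem_sup_left (sAction_mem_range_divergence hz))
    (sub_mem (Submodule.mem_sup_left ⟨_, rfl⟩) (C_mem_negligible euler_mem))

theorem sAction_mem_negligibleCore (hf : f.IsWeightedHomogeneous w 1)
    {v : Polynomial (MvPolynomial σ k)} (hv : v ∈ negligibleCore f) :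
    sAction f v ∈ negligibleCore f := fun r ↦ by
  rw [← map_smul]
  exact sAction_mem_negligible hf (hv r)

theorem sAction_mem_bernsteinBound (hf : f.IsWeightedHomogeneous w 1)
    {u : Polynomial (MvPolynomial σ k)} (hu : u ∈ bernsteinBound f) :
    sAction f u ∈ bernsteinBound f := by
  obtain ⟨v, hv, q, rfl⟩ := mem_bernsteinBound.mp hu
  have hC : q • Polynomial.C f ∈ negligibleCore f :=
    Submodule.smul_mem _ q (C_mem_negligibleCore (mem_jacobianIdeal_self hf))
  refine mem_bernsteinBound.mpr
    ⟨_, add_mem (sAction_mem_negligibleCore hf hv) hC, -q, ?_⟩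
  simp only [LinearMap.add_apply, Module.End.one_apply, map_add, neg_smul]
  abel

theorem aeval_sAction_C_sub_mem_negligible (hf : f.IsWeightedHomogeneous w 1)
    {g : MvPolynomial σ k} {q : ℚ} (hg : g.IsWeightedHomogeneous w q) (b : Polynomial k) :
    Polynomial.aeval (sAction f) b (Polynomial.C g) -
      Polynomial.C (b.eval (-((q + ∑ i, w i : ℚ) : k)) • g) ∈ negligible f := by
  obtain ⟨c, hc⟩ := Polynomial.X_sub_C_dvd_sub_C_eval (a := -((q + ∑ i, w i : ℚ) : k)) (p := b)
  have hdiv : Polynomial.aeval (sAction f) (b - Polynomial.C (b.eval (-((q + ∑ i, w i : ℚ) : k))))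
      (Polynomial.C g) ∈ negligible f := by
    rw [hc, mul_comm, map_neg, sub_neg_eq_add, map_mul, Module.End.mul_apply,
      aeval_sAction_add_C_eq_divergence hf hg]
    exact aeval_apply_mem (fun _ ↦ sAction_mem_negligible hf) c
      (Submodule.mem_sup_left ⟨_, rfl⟩)
  simpa only [map_sub, LinearMap.sub_apply, Polynomial.aeval_C, Module.algebraMap_end_apply,
    Polynomial.smul_C] using hdiv

theorem eval_eq_zero_of_aeval_sAction_one_mem (hf : f.IsWeightedHomogeneous w 1)
    (koszul : HasKoszulSyzygies fun i ↦ pderiv i f) {b : Polynomial k}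
    (hb : Polynomial.aeval (sAction f) b 1 ∈ negligibleCore f) {g : MvPolynomial σ k} {q : ℚ}
    (hg : g.IsWeightedHomogeneous w q) (hgJ : g ∉ jacobianIdeal f) :
    b.eval (-((q + ∑ i, w i : ℚ) : k)) = 0 := by
  have hbg : Polynomial.aeval (sAction f) b (Polynomial.C g) ∈ negligible f := by
    have := hb g
    rwa [← map_smul, ← map_one Polynomial.C, Polynomial.smul_C, smul_eq_mul, mul_one] at this
  by_contra h0
  refine hgJ ((Submodule.smul_mem_iff ((jacobianIdeal f).restrictScalars k) h0).mp ?_)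
  exact mem_jacobianIdeal_of_C_mem_negligible koszul
    ((Submodule.sub_mem_iff_right _ hbg).mp (aeval_sAction_C_sub_mem_negligible hf hg b))

theorem spectralPolynomial_dvd_of_aeval_sAction_one_mem_bernsteinBound (hf0 : f ≠ 0)
    (hf : f.IsWeightedHomogeneous w 1) (koszul : HasKoszulSyzygies fun i ↦ pderiv i f)
    {S : Finset ℚ} (hS : ↑S ⊆ spectralWeights w f) {b : Polynomial k}
    (hb : Polynomial.aeval (sAction f) b 1 ∈ bernsteinBound f) :
    spectralPolynomial k w S ∣ b := by
  obtain ⟨b', rfl, hb'⟩ := exists_eq_mul_of_aeval_sAction_one_mem_bernsteinBound hf0 hf hb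
  refine mul_dvd_mul_left _ (Finset.prod_dvd_of_coprime (fun p _ q _ hpq ↦ ?_) fun q hq ↦ ?_)
  · simp only [Function.onFun, ← sub_neg_eq_add _ (Polynomial.C _), ← map_neg]
    exact Polynomial.pairwise_coprime_X_sub_C (s := fun q : ℚ ↦ -((q + ∑ i, w i : ℚ) : k))
      (neg_injective.comp (Rat.cast_injective.comp (add_left_injective _))) hpq
  · obtain ⟨g, hgJ, hg⟩ := hS hq
    rw [← sub_neg_eq_add, ← map_neg, Polynomial.dvd_iff_isRoot]
    exact eval_eq_zero_of_aeval_sAction_one_mem hf koszul hb' hg hgJ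

end LowerBound

section Transfer

open Polynomial

variable {k R A : Type*} [CommRing R] [CommRing A] [Algebra R A]

/-- Malgrange's map `R[∂ₜ] δ(t - f) → R_f[s] f ^ s` for `u = f⁻¹`, sending `(-∂ₜ) ^ j δ(t - f)` to
`f⁻ʲ s (s - 1) ⋯ (s - j + 1) f ^ s`. Both variables, `-∂ₜ` and `s`, are called `X`. -/
noncomputable def graphToPower (R : Type*) {A : Type*} [CommRing R] [CommRing A] [Algebra R A]
    (u : A) : R[X] →ₗ[R] A[X] :=
  (basisMonomials R).constr R fun j ↦ C (u ^ j) * descPochhammer A j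

theorem graphToPower_monomial (u : A) (j : ℕ) (r : R) :
    graphToPower R u (monomial j r) = C (algebraMap R A r * u ^ j) * descPochhammer A j := by
  have basis : graphToPower R u (monomial j 1) = C (u ^ j) * descPochhammer A j := by
    rw [graphToPower, ← congrFun (coe_basisMonomials R) j, Module.Basis.constr_basis]
  rw [← mul_one r, ← smul_eq_mul, ← smul_monomial, map_smul, basis, ← algebraMap_smul A r,
    smul_eq_C_mul, smul_eq_mul, mul_one, map_mul, mul_assoc]

theorem graphToPower_C (u : A) (r : R) : graphToPower R u (C r) = C (algebraMap R A r) := by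
  rw [← monomial_zero_left, graphToPower_monomial, pow_zero, mul_one, descPochhammer_zero, mul_one]

theorem graphToPower_injective [IsDomain A] [FaithfulSMul R A] {u : A} (hu : u ≠ 0) :
    Function.Injective (graphToPower R u) := by
  let powers : Polynomial.Sequence A :=
    { elems' := fun j ↦ C (u ^ j) * descPochhammer A j
      degree_eq' := fun j ↦ by
        rw [degree_C_mul (pow_ne_zero j hu), degree_eq_natDegree (monic_descPochhammer A j).ne_zero,
          descPochhammer_natDegree] }
  have independent : LinearIndependent R powers := powers.linearIndependent.restrict_scalars' R
  have apply_eq (v : R[X]) : graphToPower R u v =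
      Finsupp.linearCombination R powers ((basisMonomials R).repr v) :=
    (basisMonomials R).constr_apply R _ v
  intro v v' h
  rw [apply_eq, apply_eq] at h
  exact (basisMonomials R).repr.injective (independent h)

theorem smul_eq_mulLeft_apply (r : R) (v : A[X]) : r • v = C (algebraMap R A r) * v := by
  rw [← algebraMap_smul A r, smul_eq_C_mul]

variable {f : R} {u : A}

theorem graphToPower_sAction (hu : algebraMap R A f * u = 1) (v : R[X]) :
    graphToPower R u (sAction f v) = X * graphToPower R u v := by
  induction v using Polynomial.induction_on' with
  | add p q hp hq => simp only [map_add, hp, hq, mul_add]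
  | monomial j r =>
    have sAction_monomial :
        sAction f (monomial j r) = monomial (j + 1) (f * r) + monomial j (r * j) := by
      rw [sAction_apply, C_mul_monomial, derivative_monomial, mul_add, X_mul_monomial]
      cases j <;> simp
    have cancel : algebraMap R A (f * r) * u ^ (j + 1) = algebraMap R A r * u ^ j := by
      rw [map_mul]
      linear_combination algebraMap R A r * u ^ j * hu
    rw [sAction_monomial, map_add, graphToPower_monomial, graphToPower_monomial,
      graphToPower_monomial, cancel, descPochhammer_succ_right]
    simp only [map_mul, map_natCast]
    ring

variable [CommRing k] [Algebra k A]

theorem coeffwise_descPochhammer (E : Derivation k A A) (j : ℕ) :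
    coeffwise E (descPochhammer A j) = 0 := by
  induction j with
  | zero => rw [descPochhammer_zero, Derivation.map_one_eq_zero]
  | succ j ih =>
    rw [descPochhammer_succ_right, Derivation.leibniz, ih, map_sub, coeffwise_X,
      Derivation.map_natCast, sub_zero, smul_zero, smul_zero, add_zero]

theorem derivation_inv_pow (E : Derivation k A A) {a : A} (hu : a * u = 1) (j : ℕ) :
    E (u ^ j) = -(j * u ^ (j + 1) * E a) := by
  rw [E.leibniz_pow, E.leibniz_of_mul_eq_one ((mul_comm u a).trans hu)]
  cases j with
  | zero => simp
  | succ j =>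
    simp only [nsmul_eq_mul, smul_eq_mul, Nat.add_sub_cancel]
    ring

theorem eq_twisted {E : Derivation k A A} {a : A} {L : Module.End k A[X]}
    (hL : ∀ (b : A) (m : ℕ), L (C b * X ^ m) = C (E b) * X ^ m + X * C a * (C b * X ^ m)) :
    L = twisted E a := by
  refine LinearMap.ext fun v ↦ ?_
  induction v using Polynomial.induction_on' with
  | add p q hp hq => simp only [map_add, hp, hq]
  | monomial m b =>
    rw [← C_mul_X_pow_eq_monomial, hL, twisted_apply, Derivation.leibniz, Derivation.leibniz_pow,
      coeffwise_X, coeffwise_C, smul_zero, smul_zero, smul_zero, zero_add, smul_eq_mul, mul_comm]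

/-- The action of `D_R[s]` on `R_f[s] f ^ s = A[X]`: the algebra of operators generated by the
multiplications by elements of `R`, the operators `L i` and the multiplication by `s = X`. -/
noncomputable def powerOperators (R : Type*) {k A σ : Type*} [CommRing k] [CommRing R] [CommRing A]
    [Algebra R A] [Algebra k A] (L : σ → Module.End k A[X]) :
    Subalgebra k (Module.End k A[X]) :=
  Algebra.adjoin k
    (Set.range (fun r : R ↦ LinearMap.mulLeft k (C (algebraMap R A r))) ∪ Set.range L ∪
      {LinearMap.mulLeft k X})

theorem apply_mem_of_mem_adjoin {M : Type*} [AddCommGroup M] [Module k M]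
    {G : Set (Module.End k M)} {N : Submodule k M} (hG : ∀ a ∈ G, ∀ v ∈ N, a v ∈ N)
    {a : Module.End k M} (ha : a ∈ Algebra.adjoin k G) {v : M} (hv : v ∈ N) : a v ∈ N := by
  induction ha using Algebra.adjoin_induction generalizing v with
  | mem _ ha => exact hG _ ha v hv
  | algebraMap c => exact N.smul_mem c hv
  | add _ _ _ _ ha hb => exact add_mem (ha hv) (hb hv)
  | mul _ _ _ _ ha hb => exact ha (hb hv)

variable {σ : Type*} {L : σ → Module.End k A[X]}

/-- The preimage of `D_R[s] · f ^ (s + 1)` under Malgrange's map. -/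
def graphOrbit (f : R) (u : A) (L : σ → Module.End k A[X]) : Submodule R R[X] where
  carrier := {v | ∃ a ∈ powerOperators R L, graphToPower R u v = a (C (algebraMap R A f))}
  add_mem' := by
    rintro v v' ⟨a, ha, hv⟩ ⟨a', ha', hv'⟩
    exact ⟨a + a', add_mem ha ha', by rw [map_add, hv, hv', LinearMap.add_apply]⟩
  zero_mem' := ⟨0, zero_mem _, by rw [map_zero, LinearMap.zero_apply]⟩
  smul_mem' := by
    rintro r v ⟨a, ha, hv⟩
    refine ⟨_, mul_mem (Algebra.subset_adjoin (Or.inl (Or.inl ⟨r, rfl⟩))) ha, ?_⟩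
    rw [map_smul, hv, smul_eq_mulLeft_apply]
    rfl

theorem C_mem_graphOrbit (f : R) (u : A) (L : σ → Module.End k A[X]) :
    C f ∈ graphOrbit f u L :=
  ⟨1, one_mem _, graphToPower_C u f⟩

theorem sAction_mem_graphOrbit (hu : algebraMap R A f * u = 1) {v : R[X]}
    (hv : v ∈ graphOrbit f u L) : sAction f v ∈ graphOrbit f u L := by
  obtain ⟨a, ha, hv⟩ := hv
  refine ⟨_, mul_mem (Algebra.subset_adjoin (Or.inr rfl)) ha, ?_⟩
  rw [graphToPower_sAction hu, hv]
  rfl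

variable [Algebra k R] {D : σ → Derivation k R R}

theorem nabla_mem_graphOrbit
    (hL : ∀ i v, graphToPower R u (nabla f (D i) v) = L i (graphToPower R u v)) (i : σ) {v : R[X]}
    (hv : v ∈ graphOrbit f u L) : nabla f (D i) v ∈ graphOrbit f u L := by
  obtain ⟨a, ha, hv⟩ := hv
  refine ⟨_, mul_mem (Algebra.subset_adjoin (Or.inl (Or.inr ⟨i, rfl⟩))) ha, ?_⟩
  rw [hL, hv]
  rfl

theorem graphToPower_nabla (hu : algebraMap R A f * u = 1)
    {D : Derivation k R R} {E : Derivation k A A}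
    (hE : ∀ r, E (algebraMap R A r) = algebraMap R A (D r)) (v : R[X]) :
    graphToPower R u (nabla f D v) =
      twisted E (u * algebraMap R A (D f)) (graphToPower R u v) := by
  induction v using Polynomial.induction_on' with
  | add p q hp hq => simp only [map_add, hp, hq]
  | monomial j r =>
    have nabla_monomial :
        nabla f D (monomial j r) = monomial j (D r) + monomial (j + 1) (D f * r) := by
      rw [nabla, twisted_apply, mul_assoc, C_mul_monomial, X_mul_monomial]
      congr 1
      ext m
      simp [coeff_monomial, apply_ite D]
    rw [nabla_monomial, map_add, graphToPower_monomial, graphToPower_monomial,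
      graphToPower_monomial, twisted_apply, Derivation.leibniz, coeffwise_descPochhammer,
      coeffwise_C, Derivation.leibniz, derivation_inv_pow E hu, hE,
      hE, descPochhammer_succ_right]
    simp only [map_mul, map_natCast, smul_eq_mul, map_add, map_neg, map_pow]
    ring

variable [IsScalarTower k R A]

theorem graphOrbit_le (hu : algebraMap R A f * u = 1)
    (injective : Function.Injective (graphToPower R u))
    (hL : ∀ i v, graphToPower R u (nabla f (D i) v) = L i (graphToPower R u v))
    {V : Submodule R R[X]} (hfV : C f ∈ V)
    (hnabla : ∀ i, ∀ v ∈ V, nabla f (D i) v ∈ V) (hsAction : ∀ v ∈ V, sAction f v ∈ V) :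
    graphOrbit f u L ≤ V := by
  rintro v ⟨a, ha, hv⟩
  suffices hmem : a (C (algebraMap R A f)) ∈ (V.map (graphToPower R u)).restrictScalars k by
    obtain ⟨v', hv', h⟩ := hmem
    rwa [← injective (h.trans hv.symm)]
  refine apply_mem_of_mem_adjoin ?_ ha ⟨C f, hfV, graphToPower_C u f⟩
  rintro _ ((⟨r, rfl⟩ | ⟨i, rfl⟩) | rfl) _ ⟨v, hv, rfl⟩
  · exact ⟨r • v, V.smul_mem r hv, by rw [map_smul, smul_eq_mulLeft_apply]; rfl⟩
  · exact ⟨_, hnabla i v hv, hL i v⟩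
  · exact ⟨_, hsAction v hv, graphToPower_sAction hu v⟩

theorem graphToPower_aeval_sAction_one (hu : algebraMap R A f * u = 1) (b : k[X]) :
    graphToPower R u (aeval (sAction f) b 1) = b.map (algebraMap k A) := by
  have hX (v : R[X]) : (graphToPower R u).restrictScalars k (sAction f v) =
      Algebra.lmul k A[X] X ((graphToPower R u).restrictScalars k v) :=
    graphToPower_sAction hu v
  have intertwine := map_aeval_apply hX b 1
  rw [aeval_algHom_apply, aeval_X_left_eq_map] at intertwine
  refine intertwine.trans ?_
  rw [LinearMap.restrictScalars_apply, ← map_one C, graphToPower_C, map_one, map_one]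
  exact mul_one _

end Transfer

end BernsteinSato

open BernsteinSato MvPolynomial in
theorem stmt17_general {σ k A : Type*} [Fintype σ] [Field k] [CharZero k] [CommRing A]
    [Algebra (MvPolynomial σ k) A] [Algebra k A] [IsScalarTower k (MvPolynomial σ k) A]
    {w : σ → ℚ} (hw : ∀ i, 0 < w i) {f : MvPolynomial σ k} (hf0 : f ≠ 0)
    (hf : f.IsWeightedHomogeneous w 1) [IsLocalization.Away f A] {pd : σ → Derivation k A A}
    (hpd : ∀ (i : σ) (r : MvPolynomial σ k),
      pd i (algebraMap _ A r) = algebraMap _ A (pderiv i r))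
    {S : Finset ℚ} (hS : (S : Set ℚ) = spectralWeights w f) :
    (Ideal.span {spectralPolynomial k w S} : Set (Polynomial k)) =
      {b | ∃ a ∈ powerOperators (MvPolynomial σ k) fun i ↦
          twisted (pd i) (IsLocalization.Away.invSelf f * algebraMap _ A (pderiv i f)),
        b.map (algebraMap k A) = a (Polynomial.C (algebraMap _ A f))} := by
  have hu : algebraMap _ A f * IsLocalization.Away.invSelf f = 1 :=
    IsLocalization.Away.mul_invSelf f
  have hpowers := powers_le_nonZeroDivisors_of_noZeroDivisors hf0
  have : IsDomain A := IsLocalization.isDomain_of_le_nonZeroDivisors _ hpowers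
  have : FaithfulSMul (MvPolynomial σ k) A :=
    (faithfulSMul_iff_algebraMap_injective _ _).mpr (IsLocalization.injective A hpowers)
  have injective := graphToPower_injective (R := MvPolynomial σ k) (right_ne_zero_of_mul_eq_one hu)
  have hnabla (i : σ) := graphToPower_nabla hu (hpd i)
  have koszul := hasKoszulSyzygies_pderiv hw (hS ▸ S.finite_toSet)
  ext b
  rw [SetLike.mem_coe, Ideal.mem_span_singleton, Set.mem_ofPred_eq,
    ← graphToPower_aeval_sAction_one hu]
  refine ⟨aeval_sAction_one_mem_of_spectralPolynomial_dvd hw hf (C_mem_graphOrbit f _ _)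
    (fun i _ ↦ nabla_mem_graphOrbit hnabla i) (fun _ ↦ sAction_mem_graphOrbit hu) hS.ge,
    fun hb ↦ ?_⟩
  exact spectralPolynomial_dvd_of_aeval_sAction_one_mem_bernsteinBound hf0 hf koszul hS.le
    (graphOrbit_le hu injective hnabla (C_mem_bernsteinBound f)
      (fun i _ ↦ nabla_mem_bernsteinBound i) (fun _ ↦ sAction_mem_bernsteinBound hf) hb)

/-- **Theorem 5.2 (Briançon–Granger–Maisonobe).** For a weighted homogeneous polynomial
`f` of weighted degree `1` with an isolated singularity, the set
`B = {b ∈ k[X] : b(s)f^s ∈ D_R[s]·f^{s+1}}` is an ideal of `k[X]`, and it is the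
principal ideal generated by `(s+1)·∏_{λ ∈ Σ(f)} (s + λ + |w|)`; that is, the
Bernstein–Sato polynomial of `f` is `b_f(s) = (s+1)·∏_{λ ∈ Σ(f)} (s + λ + |w|)`. -/
theorem stmt17 {k : Type*} [Field k] [IsAlgClosed k] [CharZero k]
    (n : ℕ) (hn : 1 ≤ n)
    (w : Fin n → ℚ) (hw : ∀ i, 0 < w i)
    (f : MvPolynomial (Fin n) k) (hf0 : f ≠ 0)
    (hfhom : f.IsWeightedHomogeneous w 1)
    -- the Jacobian ideal
    (Jf : Ideal (MvPolynomial (Fin n) k))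
    (hJf : Jf = Ideal.span (Set.range fun i : Fin n => MvPolynomial.pderiv i f))
    -- isolated singularity: `R/J_f` is finite dimensional over `k`
    (hfd : FiniteDimensional k (MvPolynomial (Fin n) k ⧸ Jf))
    -- the unique extensions of the partial derivatives to `k`-derivations of `R_f`
    (pd : Fin n → Derivation k (Localization.Away f) (Localization.Away f))
    (hpd : ∀ (i : Fin n) (r : MvPolynomial (Fin n) k),
      pd i (algebraMap (MvPolynomial (Fin n) k) (Localization.Away f) r) =
        algebraMap (MvPolynomial (Fin n) k) (Localization.Away f)
          (MvPolynomial.pderiv i r))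
    -- the twisted operators `L_i(u) = ∂_i(u) + X·f⁻¹·(∂f/∂x_i)·u`,
    -- with `∂_i` acting coefficientwise on `N = R_f[X]`
    (L : Fin n → Module.End k (Polynomial (Localization.Away f)))
    (hL : ∀ (i : Fin n) (a : Localization.Away f) (m : ℕ),
      L i (Polynomial.C a * Polynomial.X ^ m) =
        Polynomial.C (pd i a) * Polynomial.X ^ m +
          Polynomial.X * Polynomial.C (IsLocalization.Away.invSelf f *
            algebraMap (MvPolynomial (Fin n) k) (Localization.Away f)
              (MvPolynomial.pderiv i f)) *
            (Polynomial.C a * Polynomial.X ^ m))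
    -- the algebra of operators coming from `D_R[s]`: generated by `D_R` and `mult_X`
    (Dalg' : Subalgebra k (Module.End k (Polynomial (Localization.Away f))))
    (hDalg' : Dalg' = Algebra.adjoin k
      ((Set.range fun r : MvPolynomial (Fin n) k =>
          (LinearMap.mulLeft k (Polynomial.C
              (algebraMap (MvPolynomial (Fin n) k) (Localization.Away f) r)) :
            Module.End k (Polynomial (Localization.Away f)))) ∪
        Set.range L ∪
        {(LinearMap.mulLeft k (Polynomial.X : Polynomial (Localization.Away f)) :
            Module.End k (Polynomial (Localization.Away f)))}))
    -- the set `Σ(f)` of weighted degrees of weighted homogeneous polynomials not in `J_f`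
    (Sigf : Set ℚ)
    (hSigf : Sigf = {q : ℚ | ∃ g : MvPolynomial (Fin n) k,
      g ∉ Jf ∧ g.IsWeightedHomogeneous w q})
    -- `S` enumerates `Σ(f)` (a finite set)
    (S : Finset ℚ) (hS : ∀ q : ℚ, q ∈ S ↔ q ∈ Sigf)
    -- the set `B = {b : b(X)·1 ∈ D'·(f·1)}`
    (B : Set (Polynomial k))
    (hB : B = {b : Polynomial k | ∃ a ∈ Dalg',
      Polynomial.map (algebraMap k (Localization.Away f)) b =
        a (Polynomial.C
          (algebraMap (MvPolynomial (Fin n) k) (Localization.Away f) f))}) :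
    ∃ I : Ideal (Polynomial k), (↑I : Set (Polynomial k)) = B ∧
      I = Ideal.span {(Polynomial.X + 1) *
        ∏ lam ∈ S, (Polynomial.X + Polynomial.C ((lam + ∑ i, w i : ℚ) : k))} := by
  obtain rfl := funext fun i ↦ BernsteinSato.eq_twisted (hL i)
  subst hJf hDalg' hSigf hB
  exact ⟨_, stmt17_general hw hf0 hfhom hpd (Set.ext hS), rfl⟩
end
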